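/- Let S be a quasi-hereditary algebra with Ringel dual S'. For every λ ∈ Λ⁺, the Δ-filtration dimension of the costandard module ∇(λ) of S equals the projective dimension of the standard module Δ'(λ) of S': wfd(∇(λ)) = proj(Δ'(λ)). -/

import Mathlib

/-!
Common definitions for formalizing "On the global and ∇-filtration dimensions of
quasi-hereditary algebras" by Erdmann and Parker.

We work with a finite-dimensional algebra `S` over a field `k`; since `S` is
finite dimensional over `k`, the finite-dimensional `S`-modules are exactly the
finitely generated ones, so we express finite-dimensionality of a module `M` as
`Module.Finite S M`.
-/

open CategoryTheory

namespace QHPaper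

variable (S : Type) [Ring S]

/-- The subquotient `B ⧸ A` associated to two submodules `A B` of `M`. -/
abbrev subquot {M : ModuleCat.{0} S} (A B : Submodule S ↥M) : Type :=
  ↥B ⧸ (Submodule.comap B.subtype A)

/-- A filtration `⊥ = f 0 ≤ f 1 ≤ ⋯ ≤ f n = ⊤` of `M` whose `i`-th section
`f (i+1) / f i` is isomorphic to the prescribed module `D i`. -/
def HasFiltrationWithSections (M : ModuleCat.{0} S) (n : ℕ)
    (f : Fin (n + 1) → Submodule S ↥M) (D : Fin n → ModuleCat.{0} S) : Prop :=
  Monotone f ∧ f 0 = ⊥ ∧ f (Fin.last n) = ⊤ ∧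
    ∀ i : Fin n, Nonempty ((subquot S (f i.castSucc) (f i.succ)) ≃ₗ[S] ↥(D i))

/-- `L` occurs as a (simple) subquotient of `M`; for `L` simple this says that `L`
is a composition factor of `M`. -/
def IsCompFactor (L M : ModuleCat.{0} S) : Prop :=
  ∃ (A B : Submodule S ↥M), A ≤ B ∧ Nonempty ((subquot S A B) ≃ₗ[S] ↥L)

/-- `L` occurs with multiplicity `m` among the sections of a composition series of `M`. -/
def CompFactorMult (L M : ModuleCat.{0} S) (m : ℕ) : Prop :=
  ∃ (n : ℕ) (f : Fin (n + 1) → Submodule S ↥M),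
    Monotone f ∧ f 0 = ⊥ ∧ f (Fin.last n) = ⊤ ∧
    (∀ i : Fin n, IsSimpleModule S (subquot S (f i.castSucc) (f i.succ))) ∧
    Nat.card {i : Fin n // Nonempty ((subquot S (f i.castSucc) (f i.succ)) ≃ₗ[S] ↥L)} = m

/-- `P` is a projective cover of `M`: `P` is projective and there is a surjection
`P → M` whose kernel is superfluous in `P`. -/
def IsProjCover (P M : ModuleCat.{0} S) : Prop :=
  Module.Projective S ↥P ∧ ∃ π : ↥P →ₗ[S] ↥M, Function.Surjective π ∧
    ∀ N : Submodule S ↥P, N ⊔ LinearMap.ker π = ⊤ → N = ⊤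

/-- `I` is an injective hull of `M`: `I` is injective and there is an injection
`M → I` with essential image. -/
def IsInjHull (I M : ModuleCat.{0} S) : Prop :=
  Module.Injective S ↥I ∧ ∃ ι : ↥M →ₗ[S] ↥I, Function.Injective ι ∧
    ∀ N : Submodule S ↥I, N ⊓ LinearMap.range ι = ⊥ → N = ⊥

/-- The data of a quasi-hereditary algebra structure on `S` with weight poset `Λ`:
a full set `L` of pairwise non-isomorphic simple modules, their projective covers `P`
and injective hulls `I`, the standard modules `std` (largest quotient of `P lam` with
all composition factors `L mu`, `mu ≤ lam`), the costandard modules `costd`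
(largest submodule of `I lam` with all composition factors `L mu`, `mu ≤ lam`),
such that `L lam` occurs exactly once in `std lam` and `P lam` is filtered by
standard modules `std mu` with `mu ≥ lam`, with `std lam` occurring exactly once. -/
structure QHData (Λ : Type) [Fintype Λ] [PartialOrder Λ] where
  L : Λ → ModuleCat.{0} S
  P : Λ → ModuleCat.{0} S
  I : Λ → ModuleCat.{0} S
  std : Λ → ModuleCat.{0} S
  costd : Λ → ModuleCat.{0} S
  finiteL : ∀ lam, Module.Finite S ↥(L lam)
  simpleL : ∀ lam, IsSimpleModule S ↥(L lam)
  nonisoL : ∀ lam mu, lam ≠ mu → IsEmpty (↥(L lam) ≃ₗ[S] ↥(L mu))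
  fullL : ∀ M : ModuleCat.{0} S, IsSimpleModule S ↥M → ∃ lam, Nonempty (↥M ≃ₗ[S] ↥(L lam))
  projCover : ∀ lam, IsProjCover S (P lam) (L lam)
  injHull : ∀ lam, IsInjHull S (I lam) (L lam)
  stdSpec : ∀ lam, ∃ K : Submodule S ↥(P lam),
    Nonempty (↥(std lam) ≃ₗ[S] (↥(P lam) ⧸ K)) ∧
    (∀ mu, IsCompFactor S (L mu) (ModuleCat.of S (↥(P lam) ⧸ K)) → mu ≤ lam) ∧
    ∀ K' : Submodule S ↥(P lam),
      (∀ mu, IsCompFactor S (L mu) (ModuleCat.of S (↥(P lam) ⧸ K')) → mu ≤ lam) → K ≤ K'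
  costdSpec : ∀ lam, ∃ V : Submodule S ↥(I lam),
    Nonempty (↥(costd lam) ≃ₗ[S] ↥V) ∧
    (∀ mu, IsCompFactor S (L mu) (ModuleCat.of S ↥V) → mu ≤ lam) ∧
    ∀ V' : Submodule S ↥(I lam),
      (∀ mu, IsCompFactor S (L mu) (ModuleCat.of S ↥V') → mu ≤ lam) → V' ≤ V
  multOne : ∀ lam, CompFactorMult S (L lam) (std lam) 1
  projFilt : ∀ lam, ∃ (n : ℕ) (f : Fin (n + 1) → Submodule S ↥(P lam)) (g : Fin n → Λ),
    HasFiltrationWithSections S (P lam) n f (fun i => std (g i)) ∧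
    (∀ i, lam ≤ g i) ∧ Nat.card {i : Fin n // g i = lam} = 1

variable {Λ : Type} [Fintype Λ] [PartialOrder Λ]

/-- `M` has a filtration with costandard sections, i.e. `M ∈ F(∇)`. -/
def InCostdFilt (Q : QHData S Λ) (M : ModuleCat.{0} S) : Prop :=
  ∃ (n : ℕ) (f : Fin (n + 1) → Submodule S ↥M) (g : Fin n → Λ),
    HasFiltrationWithSections S M n f (fun i => Q.costd (g i))

/-- `M` has a filtration with standard sections, i.e. `M ∈ F(Δ)`. -/
def InStdFilt (Q : QHData S Λ) (M : ModuleCat.{0} S) : Prop :=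
  ∃ (n : ℕ) (f : Fin (n + 1) → Submodule S ↥M) (g : Fin n → Λ),
    HasFiltrationWithSections S M n f (fun i => Q.std (g i))

/-- `0 → N 0 → N 1 → ⋯ → N (n+1) → 0` is exact. -/
def IsExactSeq (n : ℕ) (N : Fin (n + 2) → ModuleCat.{0} S)
    (f : ∀ i : Fin (n + 1), ↥(N i.castSucc) →ₗ[S] ↥(N i.succ)) : Prop :=
  Function.Injective (f 0) ∧ Function.Surjective (f (Fin.last n)) ∧
    ∀ i : Fin n, LinearMap.range (f i.castSucc) = LinearMap.ker (f i.succ)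

/-- `M` has a ∇-resolution (co-resolution by modules in `F(∇)`) of length `d`:
`0 → M → M₀ → ⋯ → M_d → 0` with each `Mᵢ ∈ F(∇)`. -/
def GfdLE (Q : QHData S Λ) (M : ModuleCat.{0} S) (d : ℕ) : Prop :=
  ∃ (N : Fin (d + 2) → ModuleCat.{0} S)
    (f : ∀ i : Fin (d + 1), ↥(N i.castSucc) →ₗ[S] ↥(N i.succ)),
    IsExactSeq S d N f ∧ N 0 = M ∧ ∀ i : Fin (d + 1), InCostdFilt S Q (N i.succ)

/-- The ∇-filtration dimension (good filtration dimension) of a module. -/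
noncomputable def gfd (Q : QHData S Λ) (M : ModuleCat.{0} S) : ℕ :=
  sInf {d | GfdLE S Q M d}

/-- `M` has a resolution `0 → M_d → ⋯ → M₀ → M → 0` with each `Mᵢ ∈ F(Δ)`. -/
def WfdLE (Q : QHData S Λ) (M : ModuleCat.{0} S) (d : ℕ) : Prop :=
  ∃ (N : Fin (d + 2) → ModuleCat.{0} S)
    (f : ∀ i : Fin (d + 1), ↥(N i.castSucc) →ₗ[S] ↥(N i.succ)),
    IsExactSeq S d N f ∧ N (Fin.last (d + 1)) = M ∧
    ∀ i : Fin (d + 1), InStdFilt S Q (N i.castSucc)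

/-- The Δ-filtration dimension of a module. -/
noncomputable def wfd (Q : QHData S Λ) (M : ModuleCat.{0} S) : ℕ :=
  sInf {d | WfdLE S Q M d}

/-- `M` has a projective resolution of length `d`. -/
def ProjdimLE (M : ModuleCat.{0} S) (d : ℕ) : Prop :=
  ∃ (N : Fin (d + 2) → ModuleCat.{0} S)
    (f : ∀ i : Fin (d + 1), ↥(N i.castSucc) →ₗ[S] ↥(N i.succ)),
    IsExactSeq S d N f ∧ N (Fin.last (d + 1)) = M ∧
    ∀ i : Fin (d + 1), Module.Projective S ↥(N i.castSucc)

/-- The projective dimension of a module. -/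
noncomputable def projdim (M : ModuleCat.{0} S) : ℕ :=
  sInf {d | ProjdimLE S M d}

/-- `M` has an injective resolution of length `d`. -/
def InjdimLE (M : ModuleCat.{0} S) (d : ℕ) : Prop :=
  ∃ (N : Fin (d + 2) → ModuleCat.{0} S)
    (f : ∀ i : Fin (d + 1), ↥(N i.castSucc) →ₗ[S] ↥(N i.succ)),
    IsExactSeq S d N f ∧ N 0 = M ∧
    ∀ i : Fin (d + 1), Module.Injective S ↥(N i.succ)

/-- The injective dimension of a module. -/
noncomputable def injdim (M : ModuleCat.{0} S) : ℕ :=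
  sInf {d | InjdimLE S M d}

/-- `gfd(S)`: the supremum of the ∇-filtration dimensions of all
finite-dimensional `S`-modules. -/
noncomputable def gfdAlg (Q : QHData S Λ) : ℕ :=
  sSup {d | ∃ M : ModuleCat.{0} S, Module.Finite S ↥M ∧ gfd S Q M = d}

/-- `wfd(S)`: the supremum of the Δ-filtration dimensions of all
finite-dimensional `S`-modules. -/
noncomputable def wfdAlg (Q : QHData S Λ) : ℕ :=
  sSup {d | ∃ M : ModuleCat.{0} S, Module.Finite S ↥M ∧ wfd S Q M = d}

/-- The global dimension of `S`: the supremum of the projective dimensions of all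
finite-dimensional `S`-modules. -/
noncomputable def globdim : ℕ :=
  sSup {d | ∃ M : ModuleCat.{0} S, Module.Finite S ↥M ∧ projdim S M = d}

/-- `Ext^n_S(A, B) ≠ 0`. -/
noncomputable def extNe (A B : ModuleCat.{0} S) (n : ℕ) : Prop :=
  Nontrivial ↥(((Ext ℤ (ModuleCat.{0} S) n).obj (Opposite.op A)).obj B)

/-- A simple-preserving duality on `S`: a contravariant, exact, fully faithful,
additive self-functor `D` on the category of finite-dimensional `S`-modules with
`D (D M) ≅ M` and `D (L lam) ≅ L lam` for all `lam`. -/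
structure Duality (Q : QHData S Λ) where
  D : ModuleCat.{0} S → ModuleCat.{0} S
  Dmap : ∀ {A B : ModuleCat.{0} S}, (↥A →ₗ[S] ↥B) → (↥(D B) →ₗ[S] ↥(D A))
  finD : ∀ M : ModuleCat.{0} S, Module.Finite S ↥M → Module.Finite S ↥(D M)
  Did : ∀ A : ModuleCat.{0} S, Module.Finite S ↥A →
    Dmap (LinearMap.id : ↥A →ₗ[S] ↥A) = LinearMap.id
  Dcomp : ∀ {A B C : ModuleCat.{0} S}, Module.Finite S ↥A → Module.Finite S ↥B →
    Module.Finite S ↥C → ∀ (f : ↥A →ₗ[S] ↥B) (g : ↥B →ₗ[S] ↥C),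
      Dmap (g ∘ₗ f) = Dmap f ∘ₗ Dmap g
  Dadd : ∀ {A B : ModuleCat.{0} S}, Module.Finite S ↥A → Module.Finite S ↥B →
    ∀ (f g : ↥A →ₗ[S] ↥B), Dmap (f + g) = Dmap f + Dmap g
  Dfull : ∀ {A B : ModuleCat.{0} S}, Module.Finite S ↥A → Module.Finite S ↥B →
    Function.Bijective (fun f : ↥A →ₗ[S] ↥B => Dmap f)
  Dexact : ∀ {A B C : ModuleCat.{0} S}, Module.Finite S ↥A → Module.Finite S ↥B →
    Module.Finite S ↥C → ∀ (f : ↥A →ₗ[S] ↥B) (g : ↥B →ₗ[S] ↥C),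
      Function.Injective f → Function.Surjective g →
      LinearMap.range f = LinearMap.ker g →
      Function.Injective (Dmap g) ∧ Function.Surjective (Dmap f) ∧
        LinearMap.range (Dmap g) = LinearMap.ker (Dmap f)
  Dinvol : ∀ M : ModuleCat.{0} S, Module.Finite S ↥M → Nonempty (↥(D (D M)) ≃ₗ[S] ↥M)
  DL : ∀ lam, Nonempty (↥(D (Q.L lam)) ≃ₗ[S] ↥(Q.L lam))

/-- Strong property A: `mu < lam` implies `gfd (L mu) < gfd (L lam)`. -/
def StrongPropA (Q : QHData S Λ) : Prop :=
  ∀ mu lam : Λ, mu < lam → gfd S Q (Q.L mu) < gfd S Q (Q.L lam)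

/-- Property A: `mu < lam` implies `gfd (L mu) ≤ gfd (L lam)`. -/
def PropA (Q : QHData S Λ) : Prop :=
  ∀ mu lam : Λ, mu < lam → gfd S Q (Q.L mu) ≤ gfd S Q (Q.L lam)

/-- Property B: `mu < lam` implies `wfd (∇ mu) ≤ wfd (∇ lam)`. -/
def PropB (Q : QHData S Λ) : Prop :=
  ∀ mu lam : Λ, mu < lam → wfd S Q (Q.costd mu) ≤ wfd S Q (Q.costd lam)

/-- Property C: `wfd (∇ lam) = gfd S - inj (∇ lam)` for all `lam`. -/
def PropC (Q : QHData S Λ) : Prop :=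
  ∀ lam : Λ, wfd S Q (Q.costd lam) = gfdAlg S Q - injdim S (Q.costd lam)

/-- Property D: `wfd (∇ lam) = wfd (L lam)` for all `lam`. -/
def PropD (Q : QHData S Λ) : Prop :=
  ∀ lam : Λ, wfd S Q (Q.costd lam) = wfd S Q (Q.L lam)

/-- Property E: `mu < lam` implies `inj (∇ mu) ≥ inj (∇ lam)`. -/
def PropE (Q : QHData S Λ) : Prop :=
  ∀ mu lam : Λ, mu < lam → injdim S (Q.costd lam) ≤ injdim S (Q.costd mu)

/-- The partial order is minimal for the quasi-hereditary structure: whenever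
`mu < lam` are adjacent, `L mu` is a composition factor of `Δ lam` or of `∇ lam`. -/
def MinimalOrder (Q : QHData S Λ) : Prop :=
  ∀ mu lam : Λ, mu < lam → (¬ ∃ nu, mu < nu ∧ nu < lam) →
    IsCompFactor S (Q.L mu) (Q.std lam) ∨ IsCompFactor S (Q.L mu) (Q.costd lam)

/-- `S` is connected (indecomposable as an algebra, i.e. one block): the only
central idempotents are `0` and `1`. -/
def ConnectedRing : Prop :=
  ∀ c : S, c * c = c → (∀ s : S, c * s = s * c) → c = 0 ∨ c = 1

/-- A tilting module: a module in `F(Δ) ∩ F(∇)`. -/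
def IsTilting (Q : QHData S Λ) (T : ModuleCat.{0} S) : Prop :=
  InStdFilt S Q T ∧ InCostdFilt S Q T

/-- The indecomposable tilting module `T(lam)`: an indecomposable tilting module in
which `L lam` occurs exactly once and all other composition factors `L mu` have
`mu < lam`. -/
def IsIndecTilting (Q : QHData S Λ) (lam : Λ) (T : ModuleCat.{0} S) : Prop :=
  IsTilting S Q T ∧ Nontrivial ↥T ∧
    (∀ A B : Submodule S ↥T, IsCompl A B → A = ⊥ ∨ B = ⊥) ∧
    CompFactorMult S (Q.L lam) T 1 ∧
    ∀ mu, IsCompFactor S (Q.L mu) T → mu = lam ∨ mu < lam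

/-- A full tilting module: a (finite-dimensional) tilting module having every
indecomposable tilting module as a direct summand. -/
def IsFullTilting (Q : QHData S Λ) (T : ModuleCat.{0} S) : Prop :=
  IsTilting S Q T ∧ Module.Finite S ↥T ∧
    ∀ (lam : Λ) (Tl : ModuleCat.{0} S), IsIndecTilting S Q lam Tl →
      ∃ Cc : ModuleCat.{0} S, Nonempty (↥T ≃ₗ[S] (↥Tl × ↥Cc))

/-- The Ringel dual ring `S' = End_S(T)^op`. -/
abbrev RingelDualRing (T : ModuleCat.{0} S) : Type := (Module.End S ↥T)ᵐᵒᵖ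

/-- `Hom_S(T, X)` is a module over `S' = End_S(T)^op` via `f • φ = φ ∘ f`. -/
instance homTModule (T X : ModuleCat.{0} S) :
    Module (RingelDualRing S T) (↥T →ₗ[S] ↥X) where
  smul a φ := φ ∘ₗ a.unop
  one_smul φ := rfl
  mul_smul a b φ := rfl
  smul_zero a := rfl
  smul_add a φ ψ := rfl
  add_smul a b φ := by
    ext x
    show φ ((a.unop + b.unop) x) = φ (a.unop x) + φ (b.unop x)
    rw [LinearMap.add_apply, map_add]
  zero_smul φ := by
    ext x
    show φ ((0 : Module.End S ↥T) x) = 0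
    rw [LinearMap.zero_apply, map_zero]

/-- The `S'`-module `Hom_S(T, X)`, i.e. the image of `X` under the functor
`F = Hom_S(T, -)`. -/
noncomputable def homTMod (T X : ModuleCat.{0} S) :
    ModuleCat.{0} (RingelDualRing S T) :=
  ModuleCat.of (RingelDualRing S T) (↥T →ₗ[S] ↥X)

/-- `Q'` is a Ringel dual quasi-hereditary structure for `(Q, T)`:
`T` is a full tilting module, `Q'` is a quasi-hereditary structure on
`S' = End_S(T)^op` for the opposite poset, and its standard modules are
`Δ'(lam) = Hom_S(T, ∇(lam))`. -/
def IsRingelDualData (Q : QHData S Λ) (T : ModuleCat.{0} S)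
    (Q' : QHData (RingelDualRing S T) Λᵒᵈ) : Prop :=
  IsFullTilting S Q T ∧
    ∀ lam : Λ, Nonempty
      (↥(Q'.std (OrderDual.toDual lam)) ≃ₗ[RingelDualRing S T]
        (↥T →ₗ[S] ↥(Q.costd lam)))

/-- `0 → T_d → ⋯ → T_0 → M → 0` exact with all `T_i` tilting modules. -/
def TiltResLE (Q : QHData S Λ) (M : ModuleCat.{0} S) (d : ℕ) : Prop :=
  ∃ (N : Fin (d + 2) → ModuleCat.{0} S)
    (f : ∀ i : Fin (d + 1), ↥(N i.castSucc) →ₗ[S] ↥(N i.succ)),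
    IsExactSeq S d N f ∧ N (Fin.last (d + 1)) = M ∧
    ∀ i : Fin (d + 1), IsTilting S Q (N i.castSucc)

/-- An idempotent `e` is primitive if it is nonzero and is not the sum of two
nonzero orthogonal idempotents. -/
def IsPrimitiveIdempotent (e : S) : Prop :=
  e * e = e ∧ e ≠ 0 ∧ ∀ a b : S, a * a = a → b * b = b → a * b = 0 → b * a = 0 →
    e = a + b → a = 0 ∨ b = 0

/-- The additive subgroup `e•M = {m | e • m = m}` of `M` (for `e` idempotent). -/
def cornerSet (eG : S) (M : ModuleCat.{0} S) : AddSubgroup ↥M where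
  carrier := {m | eG • m = m}
  add_mem' := by
    intro a b ha hb
    simp only [Set.mem_setOf_eq] at *
    rw [smul_add, ha, hb]
  zero_mem' := by
    simp only [Set.mem_setOf_eq]
    rw [smul_zero]
  neg_mem' := by
    intro a ha
    simp only [Set.mem_setOf_eq] at *
    rw [smul_neg, ha]

/-- The `R`-module structure on `e•M`, where `ι : R → S` identifies `R` with the
corner ring `eSe` (as a non-unital ring, with `ι 1 = e`). -/
def cornerModuleStructure (R : Type) [Ring R] (ι : R →ₙ+* S) (eG : S)
    (hone : ι 1 = eG) (hrange : ∀ r : R, eG * ι r * eG = ι r)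
    (M : ModuleCat.{0} S) : Module R ↥(cornerSet S eG M) where
  smul r m := ⟨ι r • (m : ↥M), by
    have hm : eG • (m : ↥M) = (m : ↥M) := m.2
    show eG • (ι r • (m : ↥M)) = ι r • (m : ↥M)
    have h : eG • (ι r • (m : ↥M)) = (eG * ι r * eG) • (m : ↥M) := by
      rw [mul_assoc, mul_smul, mul_smul, hm]
    rw [h, hrange]⟩
  one_smul m := by
    apply Subtype.ext
    show ι 1 • (m : ↥M) = (m : ↥M)
    rw [hone]
    exact m.2
  mul_smul r s m := by
    apply Subtype.ext
    show ι (r * s) • (m : ↥M) = ι r • (ι s • (m : ↥M))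
    rw [map_mul, mul_smul]
  smul_zero r := by
    apply Subtype.ext
    show ι r • (0 : ↥M) = 0
    rw [smul_zero]
  smul_add r m n := by
    apply Subtype.ext
    show ι r • ((m : ↥M) + (n : ↥M)) = ι r • (m : ↥M) + ι r • (n : ↥M)
    rw [smul_add]
  add_smul r s m := by
    apply Subtype.ext
    show ι (r + s) • (m : ↥M) = ι r • (m : ↥M) + ι s • (m : ↥M)
    rw [map_add, add_smul]
  zero_smul m := by
    apply Subtype.ext
    show ι 0 • (m : ↥M) = 0
    rw [map_zero, zero_smul]

/-- The `R`-module `e•M`, where `R ≅ eSe` via `ι`. -/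
noncomputable def cornerMod (R : Type) [Ring R] (ι : R →ₙ+* S) (eG : S)
    (hone : ι 1 = eG) (hrange : ∀ r : R, eG * ι r * eG = ι r)
    (M : ModuleCat.{0} S) : ModuleCat.{0} R :=
  @ModuleCat.of R _ ↥(cornerSet S eG M) _
    (cornerModuleStructure S R ι eG hone hrange M)

end QHPaper

/-!
For `X ∈ F(∇)`, each of the two dimensions is at most `d` if and only if `Ext^{d+1}(X, ∇(ν)) = 0`
for all `ν`. Every such `X` sits in a short exact sequence `0 → K → Tⁿ → X → 0` with `K ∈ F(∇)`.
Since `Tⁿ ∈ F(Δ)`, passing from `X` to `K` shifts the groups `Ext(-, ∇(ν))` by one. The functor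
`Hom_S(T, -)` is exact on `F(∇)` and sends `Tⁿ` to a free `S'`-module, so the projective dimension
shifts in the same way. The induction starts at `d = 0`: a splitting of `Hom_S(T, Tⁿ) → Hom_S(T, X)`
comes from a splitting of `Tⁿ → X`, so `Hom_S(T, X)` is projective if and only if `X ∈ F(Δ)`.

The sequences are assembled from surjections `T → ∇(λ)` through which every map `Δ(μ) → ∇(λ)`
factors, a condition that puts the kernel in `F(∇)`. Iterated universal extensions of `∇(λ)` by the
modules `∇(ν)` with `ν < λ`, in order of decreasing `ν`, lead to such a surjection `U → ∇(λ)` with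
`U` tilting. It factors through the indecomposable summand of `U` in which `L(λ)` occurs; that
summand is `T(λ)`, hence a summand of `T`.
-/

universe u

namespace QHPaper

section ShortExact

variable {R : Type u} [Ring R]

/-- The sequence `0 → A → B → C → 0` given by the linear maps `f` and `g` is exact. -/
structure IsShortExact {A B C : ModuleCat.{u} R} (f : A →ₗ[R] B) (g : B →ₗ[R] C) : Prop where
  injective : Function.Injective f
  surjective : Function.Surjective g
  exact : Function.Exact f g

variable {A B C : ModuleCat.{u} R} {f : A →ₗ[R] B} {g : B →ₗ[R] C}

theorem isShortExact_subtype_mkQ (N : Submodule R B) :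
    IsShortExact (A := ModuleCat.of R N) (C := ModuleCat.of R (B ⧸ N)) N.subtype N.mkQ :=
  ⟨N.injective_subtype, N.mkQ_surjective, LinearMap.exact_subtype_mkQ N⟩

theorem isShortExact_ker_subtype (hg : Function.Surjective g) :
    IsShortExact (A := ModuleCat.of R (LinearMap.ker g)) (LinearMap.ker g).subtype g :=
  ⟨Submodule.injective_subtype _, hg, g.exact_subtype_ker_map⟩

theorem isShortExact_range_mkQ (hf : Function.Injective f) :
    IsShortExact (C := ModuleCat.of R (B ⧸ LinearMap.range f)) f (LinearMap.range f).mkQ :=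
  ⟨hf, Submodule.mkQ_surjective _, f.exact_map_mkQ_range⟩

theorem isShortExact_inl_snd (A B : ModuleCat.{u} R) :
    IsShortExact (B := ModuleCat.of R (A × B)) (LinearMap.inl R A B) (LinearMap.snd R A B) :=
  ⟨LinearMap.inl_injective, LinearMap.snd_surjective, Function.Exact.inl_snd⟩

namespace IsShortExact

theorem comp_eq_zero (h : IsShortExact f g) : g ∘ₗ f = 0 :=
  h.exact.linearMap_comp_eq_zero

theorem shortExact (h : IsShortExact f g) :
    (ShortComplex.mk (ModuleCat.ofHom f) (ModuleCat.ofHom g)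
      (ModuleCat.hom_ext h.comp_eq_zero)).ShortExact where
  exact := by
    rw [ShortComplex.moduleCat_exact_iff]
    exact fun x hx => (h.exact x).1 hx
  mono_f := (ModuleCat.mono_iff_injective _).2 h.injective
  epi_g := (ModuleCat.epi_iff_surjective _).2 h.surjective

theorem congr_left (h : IsShortExact f g) {A' : ModuleCat.{u} R} (e : A' ≃ₗ[R] A) :
    IsShortExact (f ∘ₗ e.toLinearMap) g where
  injective := h.injective.comp e.injective
  surjective := h.surjective
  exact := by
    rw [LinearMap.exact_iff, LinearMap.range_comp, LinearEquiv.range, Submodule.map_top]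
    exact h.exact.linearMap_ker_eq

theorem congr_right (h : IsShortExact f g) {C' : ModuleCat.{u} R} (e : C ≃ₗ[R] C') :
    IsShortExact f (e.toLinearMap ∘ₗ g) where
  injective := h.injective
  surjective := e.surjective.comp h.surjective
  exact := by
    rw [LinearMap.exact_iff, LinearEquiv.ker_comp]
    exact h.exact.linearMap_ker_eq

theorem congr_mid (h : IsShortExact f g) {B' : ModuleCat.{u} R} (e : B ≃ₗ[R] B') :
    IsShortExact (e.toLinearMap ∘ₗ f) (g ∘ₗ e.symm.toLinearMap) where
  injective := e.injective.comp h.injective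
  surjective := h.surjective.comp e.symm.surjective
  exact := by
    rw [LinearMap.exact_iff, LinearMap.ker_comp, h.exact.linearMap_ker_eq, LinearMap.range_comp]
    exact (Submodule.map_equiv_eq_comap_symm e _).symm

theorem exists_factor (h : IsShortExact f g) {X : ModuleCat.{u} R} (v : X →ₗ[R] B)
    (hv : g ∘ₗ v = 0) : ∃ w : X →ₗ[R] A, f ∘ₗ w = v := by
  refine ⟨(LinearEquiv.ofInjective f h.injective).symm.toLinearMap ∘ₗ
    v.codRestrict (LinearMap.range f) fun x => (h.exact _).1 (LinearMap.congr_fun hv x), ?_⟩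
  ext x
  exact congrArg Subtype.val ((LinearEquiv.ofInjective f h.injective).apply_symm_apply _)

theorem exists_desc (h : IsShortExact f g) {Y : ModuleCat.{u} R} (v : B →ₗ[R] Y)
    (hv : v ∘ₗ f = 0) : ∃ w : C →ₗ[R] Y, w ∘ₗ g = v := by
  have hker : LinearMap.ker g ≤ LinearMap.ker v := by
    rw [h.exact.linearMap_ker_eq]
    exact LinearMap.range_le_ker_iff.2 hv
  refine ⟨(LinearMap.ker g).liftQ v hker ∘ₗ
    (g.quotKerEquivOfSurjective h.surjective).symm.toLinearMap, ?_⟩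
  ext x
  have hx : (g.quotKerEquivOfSurjective h.surjective).symm (g x) = (LinearMap.ker g).mkQ x :=
    (LinearEquiv.symm_apply_eq _).2 rfl
  simp only [LinearMap.comp_apply, LinearEquiv.coe_coe, hx, Submodule.mkQ_apply,
    Submodule.liftQ_apply]

theorem exists_pullback (h : IsShortExact f g) {C' D : ModuleCat.{u} R} {c : C' →ₗ[R] C}
    {d : C →ₗ[R] D} (h' : IsShortExact c d) :
    ∃ (B' : ModuleCat.{u} R) (f' : A →ₗ[R] B') (g' : B' →ₗ[R] C') (b : B' →ₗ[R] B),
      IsShortExact f' g' ∧ IsShortExact b (d ∘ₗ g) ∧ c ∘ₗ g' = g ∘ₗ b := by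
  have hb := isShortExact_ker_subtype (g := d ∘ₗ g) (h'.surjective.comp h.surjective)
  obtain ⟨f', hf'⟩ := hb.exists_factor f (by rw [LinearMap.comp_assoc, h.comp_eq_zero,
    LinearMap.comp_zero])
  obtain ⟨g', hg'⟩ := h'.exists_factor (X := ModuleCat.of R (LinearMap.ker (d ∘ₗ g)))
    (g ∘ₗ (LinearMap.ker (d ∘ₗ g)).subtype)
    (by rw [← LinearMap.comp_assoc]; exact hb.comp_eq_zero)
  refine ⟨_, f', g', _, ⟨?_, fun y => ?_, fun x => ?_⟩, hb, hg'⟩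
  · exact .of_comp (f := (LinearMap.ker (d ∘ₗ g)).subtype) <| by
      rw [← LinearMap.coe_comp, hf']
      exact h.injective
  · obtain ⟨x, hx⟩ := h.surjective (c y)
    obtain ⟨z, rfl⟩ := (hb.exact x).1 <| by
      rw [LinearMap.comp_apply, hx]
      exact LinearMap.congr_fun h'.comp_eq_zero y
    exact ⟨z, h'.injective ((LinearMap.congr_fun hg' z).trans hx)⟩
  · have hx : g' x = 0 ↔ g ((LinearMap.ker (d ∘ₗ g)).subtype x) = 0 := by
      rw [← map_eq_zero_iff c h'.injective]
      exact Eq.congr_left (LinearMap.congr_fun hg' x)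
    rw [hx, h.exact]
    refine exists_congr fun a => ?_
    rw [← LinearMap.congr_fun hf' a]
    exact hb.injective.eq_iff

theorem exists_pushout (h : IsShortExact f g) {Z : ModuleCat.{u} R} (v : A →ₗ[R] Z) :
    ∃ (B' : ModuleCat.{u} R) (f' : Z →ₗ[R] B') (g' : B' →ₗ[R] C) (m : B × Z →ₗ[R] B'),
      IsShortExact f' g' ∧ IsShortExact (B := ModuleCat.of R (B × Z)) (f.prod v) m := by
  have hm := isShortExact_range_mkQ (B := ModuleCat.of R (B × Z)) (f := f.prod v)
    fun x y hxy => h.injective (congrArg Prod.fst hxy)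
  obtain ⟨g', hg'⟩ := hm.exists_desc (g ∘ₗ LinearMap.fst R B Z) <| by
    rw [LinearMap.comp_assoc, LinearMap.fst_prod, h.comp_eq_zero]
  have hg'm (x : B × Z) : g' ((LinearMap.range (f.prod v)).mkQ x) = g x.1 :=
    LinearMap.congr_fun hg' x
  refine ⟨_, (LinearMap.range (f.prod v)).mkQ ∘ₗ LinearMap.inr R B Z, g', _, ⟨?_, ?_, ?_⟩, hm⟩
  · rw [← LinearMap.ker_eq_bot, LinearMap.ker_eq_bot']
    intro z hz
    obtain ⟨a, ha⟩ := (hm.exact _).1 hz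
    obtain rfl : a = 0 := h.injective ((congrArg Prod.fst ha).trans (map_zero f).symm)
    exact (congrArg Prod.snd ha).symm.trans (map_zero v)
  · intro c
    obtain ⟨b, rfl⟩ := h.surjective c
    exact ⟨_, hg'm (b, 0)⟩
  · intro x
    obtain ⟨⟨b, z⟩, rfl⟩ := hm.surjective x
    rw [hg'm, h.exact]
    constructor
    · rintro ⟨a, rfl⟩
      refine ⟨z - v a, (Submodule.Quotient.eq _).2 ⟨-a, ?_⟩⟩
      ext <;> simp
    · rintro ⟨z', hz'⟩
      obtain ⟨a, ha⟩ := (Submodule.Quotient.eq _).1 hz'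
      exact ⟨-a, by simpa [neg_eq_iff_eq_neg] using congrArg Prod.fst ha⟩

end IsShortExact

end ShortExact

section ExtVanishes

variable {R : Type u} [Ring R]

/-- The vanishing `Ext^n_R(X, Y) = 0`. -/
def ExtVanishes (n : ℕ) (X Y : ModuleCat.{u} R) : Prop :=
  ∀ x : Abelian.Ext.{u} X Y n, x = 0

variable {A B C X Y Z : ModuleCat.{u} R} {f : A →ₗ[R] B} {g : B →ₗ[R] C} {n : ℕ}

namespace IsShortExact

theorem extVanishes_covariant₂ (h : IsShortExact f g) (hA : ExtVanishes n X A)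
    (hC : ExtVanishes n X C) : ExtVanishes n X B := by
  intro x
  obtain ⟨y, rfl⟩ := Abelian.Ext.covariant_sequence_exact₂ X h.shortExact x (hC _)
  rw [hA y, Abelian.Ext.zero_comp]

theorem extVanishes_covariant₃ (h : IsShortExact f g) (hB : ExtVanishes n X B)
    (hA : ExtVanishes (n + 1) X A) : ExtVanishes n X C := by
  intro x
  obtain ⟨y, rfl⟩ := Abelian.Ext.covariant_sequence_exact₃ X h.shortExact x rfl (hA _)
  rw [hB y, Abelian.Ext.zero_comp]

theorem extVanishes_contravariant₁ (h : IsShortExact f g) (hB : ExtVanishes n B Y)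
    (hC : ExtVanishes (n + 1) C Y) : ExtVanishes n A Y := by
  intro x
  obtain ⟨y, rfl⟩ :=
    Abelian.Ext.contravariant_sequence_exact₁ h.shortExact Y x (add_comm 1 n) (hC _)
  rw [hB y, Abelian.Ext.comp_zero]

theorem extVanishes_contravariant₂ (h : IsShortExact f g) (hA : ExtVanishes n A Y)
    (hC : ExtVanishes n C Y) : ExtVanishes n B Y := by
  intro x
  obtain ⟨y, rfl⟩ := Abelian.Ext.contravariant_sequence_exact₂ h.shortExact Y x (hA _)
  rw [hC y, Abelian.Ext.comp_zero]

theorem extVanishes_contravariant₃ (h : IsShortExact f g) (hA : ExtVanishes n A Y)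
    (hB : ExtVanishes (n + 1) B Y) : ExtVanishes (n + 1) C Y := by
  intro x
  obtain ⟨y, rfl⟩ :=
    Abelian.Ext.contravariant_sequence_exact₃ h.shortExact Y x (hB _) (add_comm 1 n)
  rw [hA y, Abelian.Ext.comp_zero]

theorem extVanishes_succ_iff (h : IsShortExact f g) (hB : ∀ m, ExtVanishes (m + 1) B Y) :
    ExtVanishes (n + 2) C Y ↔ ExtVanishes (n + 1) A Y :=
  ⟨h.extVanishes_contravariant₁ (hB n), fun hA => h.extVanishes_contravariant₃ hA (hB (n + 1))⟩

theorem extVanishes_one_of_exists_lift (h : IsShortExact f g)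
    (hlift : ∀ v : X →ₗ[R] C, ∃ w : X →ₗ[R] B, g ∘ₗ w = v) (hB : ExtVanishes 1 X B) :
    ExtVanishes 1 X A := by
  intro x
  obtain ⟨y, rfl⟩ := Abelian.Ext.covariant_sequence_exact₁ X h.shortExact x (hB _) (zero_add 1)
  obtain ⟨v, rfl⟩ := Abelian.Ext.homEquiv₀.symm.surjective y
  obtain ⟨w, hw⟩ := hlift v.hom
  obtain rfl : v = ModuleCat.ofHom w ≫ ModuleCat.ofHom g := ModuleCat.hom_ext hw.symm
  rw [Abelian.Ext.homEquiv₀_symm_apply, ← Abelian.Ext.mk₀_comp_mk₀,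
    Abelian.Ext.comp_assoc (a₁₂ := 0) (a₂₃ := 1) (a := 1) _ _ _ rfl rfl rfl,
    h.shortExact.comp_extClass, Abelian.Ext.comp_zero]

theorem extVanishes_one_of_exists_extend (h : IsShortExact f g)
    (hext : ∀ v : A →ₗ[R] Y, ∃ w : B →ₗ[R] Y, w ∘ₗ f = v) (hB : ExtVanishes 1 B Y) :
    ExtVanishes 1 C Y := by
  intro x
  obtain ⟨y, rfl⟩ :=
    Abelian.Ext.contravariant_sequence_exact₃ h.shortExact Y x (hB _) (add_zero 1)
  obtain ⟨v, rfl⟩ := Abelian.Ext.homEquiv₀.symm.surjective y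
  obtain ⟨w, hw⟩ := hext v.hom
  obtain rfl : v = ModuleCat.ofHom f ≫ ModuleCat.ofHom w := ModuleCat.hom_ext hw.symm
  rw [Abelian.Ext.homEquiv₀_symm_apply, ← Abelian.Ext.mk₀_comp_mk₀]
  exact h.shortExact.extClass_comp_assoc _

theorem exists_lift (h : IsShortExact f g) (hA : ExtVanishes 1 X A) (v : X →ₗ[R] C) :
    ∃ w : X →ₗ[R] B, g ∘ₗ w = v := by
  obtain ⟨y, hy⟩ := Abelian.Ext.covariant_sequence_exact₃ X h.shortExact
    (Abelian.Ext.mk₀ (ModuleCat.ofHom v)) (zero_add 1) (hA _)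
  obtain ⟨w, rfl⟩ := Abelian.Ext.homEquiv₀.symm.surjective y
  rw [Abelian.Ext.homEquiv₀_symm_apply, Abelian.Ext.mk₀_comp_mk₀] at hy
  exact ⟨w.hom, congrArg ModuleCat.Hom.hom (Abelian.Ext.homEquiv₀.symm.injective hy)⟩

theorem exists_extend (h : IsShortExact f g) (hC : ExtVanishes 1 C Y) (v : A →ₗ[R] Y) :
    ∃ w : B →ₗ[R] Y, w ∘ₗ f = v := by
  obtain ⟨y, hy⟩ := Abelian.Ext.contravariant_sequence_exact₁ h.shortExact Y
    (Abelian.Ext.mk₀ (ModuleCat.ofHom v)) (add_zero 1) (hC _)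
  obtain ⟨w, rfl⟩ := Abelian.Ext.homEquiv₀.symm.surjective y
  rw [Abelian.Ext.homEquiv₀_symm_apply, Abelian.Ext.mk₀_comp_mk₀] at hy
  exact ⟨w.hom, congrArg ModuleCat.Hom.hom (Abelian.Ext.homEquiv₀.symm.injective hy)⟩

end IsShortExact

namespace ExtVanishes

theorem of_retract_left (hZ : ExtVanishes n Z Y) {i : X →ₗ[R] Z} {r : Z →ₗ[R] X}
    (hri : r ∘ₗ i = LinearMap.id) : ExtVanishes n X Y := by
  intro x
  have hid : ModuleCat.ofHom i ≫ ModuleCat.ofHom r = 𝟙 X := ModuleCat.hom_ext hri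
  rw [← x.mk₀_id_comp, ← hid, ← Abelian.Ext.mk₀_comp_mk₀_assoc,
    hZ (Abelian.Ext.comp _ x _), Abelian.Ext.comp_zero]

theorem of_retract_right (hZ : ExtVanishes n X Z) {i : Y →ₗ[R] Z} {r : Z →ₗ[R] Y}
    (hri : r ∘ₗ i = LinearMap.id) : ExtVanishes n X Y := by
  intro x
  have hid : ModuleCat.ofHom i ≫ ModuleCat.ofHom r = 𝟙 Y := ModuleCat.hom_ext hri
  rw [← x.comp_mk₀_id, ← hid, ← Abelian.Ext.mk₀_comp_mk₀,
    ← Abelian.Ext.comp_assoc_of_second_deg_zero, hZ (x.comp _ _), Abelian.Ext.zero_comp]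

theorem of_subsingleton_left [Subsingleton X] : ExtVanishes n X Y := fun x => by
  rw [← x.mk₀_id_comp, (ModuleCat.isZero_of_subsingleton X).eq_zero_of_src (𝟙 X),
    Abelian.Ext.mk₀_zero, Abelian.Ext.zero_comp]

theorem of_subsingleton_right [Subsingleton Y] : ExtVanishes n X Y := fun x => by
  rw [← x.comp_mk₀_id, (ModuleCat.isZero_of_subsingleton Y).eq_zero_of_src (𝟙 Y),
    Abelian.Ext.mk₀_zero, Abelian.Ext.comp_zero]

theorem of_projective (h : Module.Projective R X) : ExtVanishes (n + 1) X Y := fun x =>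
  have : Projective X := (IsProjective.iff_projective _).1 h
  Abelian.Ext.eq_zero_of_projective x

theorem of_injective (h : Module.Injective R Y) : ExtVanishes (n + 1) X Y := fun x =>
  have : Injective Y := (Module.injective_iff_injective_object R Y).1 h
  Abelian.Ext.eq_zero_of_injective x

end ExtVanishes

end ExtVanishes

section Filtration

variable {S ι : Type} [Ring S] {D : ι → ModuleCat.{0} S} {M A B C : ModuleCat.{0} S}

/-- `M` has a finite filtration whose multiset of sections is `{D i | i ∈ s}`. The filtration is
grown one top section at a time, so that properties of filtered modules are proved by induction. -/
inductive IsFilteredBy (D : ι → ModuleCat.{0} S) : Multiset ι → ModuleCat.{0} S → Prop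
  | zero {M : ModuleCat.{0} S} : Subsingleton M → IsFilteredBy D 0 M
  | cons {A B : ModuleCat.{0} S} {s : Multiset ι} {i : ι} {a : A →ₗ[S] B} {b : B →ₗ[S] D i} :
      IsShortExact a b → IsFilteredBy D s A → IsFilteredBy D (i ::ₘ s) B

theorem isShortExact_subquot {X Y : Submodule S M} (h : X ≤ Y) :
    IsShortExact (A := ModuleCat.of S X) (B := ModuleCat.of S Y)
      (C := ModuleCat.of S (subquot S X Y)) (Submodule.inclusion h) (Submodule.mkQ _) where
  injective := Submodule.inclusion_injective h
  surjective := Submodule.mkQ_surjective _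
  exact := by
    rw [LinearMap.exact_iff, Submodule.ker_mkQ, Submodule.range_inclusion]

theorem IsShortExact.nonempty_subquot_range_equiv {f : A →ₗ[S] B} {g : B →ₗ[S] C}
    (h : IsShortExact f g) {a : B →ₗ[S] M} (ha : Function.Injective a) :
    Nonempty (subquot S (LinearMap.range (a ∘ₗ f)) (LinearMap.range a) ≃ₗ[S] C) := by
  let e : B ≃ₗ[S] ModuleCat.of S (LinearMap.range a) := LinearEquiv.ofInjective a ha
  have h' := h.congr_mid e
  refine ⟨(Submodule.quotEquivOfEq _ _ ?_).trans
    (LinearMap.quotKerEquivOfSurjective _ h'.surjective)⟩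
  rw [h'.exact.linearMap_ker_eq]
  ext y
  obtain ⟨x, rfl⟩ := e.surjective y
  exact exists_congr fun z => (ha.eq_iff).trans (e.injective.eq_iff).symm

namespace IsFilteredBy

theorem congr {s : Multiset ι} (h : IsFilteredBy D s A) (e : A ≃ₗ[S] B) : IsFilteredBy D s B := by
  cases h with
  | zero h => exact .zero e.symm.toEquiv.subsingleton
  | cons hab h => exact .cons (hab.congr_mid e) h

theorem single (i : ι) : IsFilteredBy D {i} (D i) :=
  .cons (isShortExact_subtype_mkQ ⊥ |>.congr_right (Submodule.quotEquivOfEqBot ⊥ rfl))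
    (.zero (inferInstanceAs (Subsingleton (⊥ : Submodule S (D i)))))

theorem add {s t : Multiset ι} {a : A →ₗ[S] B} {b : B →ₗ[S] C} (h : IsShortExact a b)
    (hA : IsFilteredBy D s A) (hC : IsFilteredBy D t C) : IsFilteredBy D (t + s) B := by
  induction hC generalizing B with
  | zero hC =>
    have ha : Function.Surjective a := fun x => (h.exact x).1 (Subsingleton.elim _ _)
    rw [zero_add]
    exact hA.congr (.ofBijective a ⟨h.injective, ha⟩)
  | cons h' _ ih =>
    obtain ⟨B', f', g', b', h₁, h₂, -⟩ := h.exists_pullback h'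
    rw [Multiset.cons_add]
    exact .cons h₂ (ih h₁)

theorem hom_eq_zero {s : Multiset ι} (h : IsFilteredBy D s A)
    (hD : ∀ i ∈ s, ∀ u : D i →ₗ[S] M, u = 0) (u : A →ₗ[S] M) : u = 0 := by
  induction h with
  | zero h => exact Subsingleton.elim _ _
  | cons hab _ ih =>
    obtain ⟨w, rfl⟩ := hab.exists_desc u
      (ih (fun i hi => hD i (Multiset.mem_cons_of_mem hi)) _)
    rw [hD _ (Multiset.mem_cons_self _ _) w, LinearMap.zero_comp]

theorem of_hasFiltrationWithSections {n : ℕ} {f : Fin (n + 1) → Submodule S M} {g : Fin n → ι}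
    (h : HasFiltrationWithSections S M n f fun i => D (g i)) :
    IsFilteredBy D (List.ofFn g) M := by
  obtain ⟨hmono, hbot, htop, hsec⟩ := h
  suffices ∀ j : Fin (n + 1),
      IsFilteredBy D ((List.ofFn g).take j) (ModuleCat.of S (f j)) by
    have hM := this (Fin.last n)
    rw [htop, Fin.val_last, List.take_of_length_le (by rw [List.length_ofFn])] at hM
    exact hM.congr Submodule.topEquiv
  intro j
  induction j using Fin.induction with
  | zero =>
    rw [hbot]
    exact .zero (inferInstanceAs (Subsingleton (⊥ : Submodule S M)))
  | succ i ih =>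
    obtain ⟨e⟩ := hsec i
    have htake : ((List.ofFn g).take i.succ : Multiset ι) =
        g i ::ₘ ((List.ofFn g).take i.castSucc : Multiset ι) := by
      rw [Fin.val_succ, Fin.val_castSucc, ← List.take_append_getElem (by simp),
        ← Multiset.coe_add, Multiset.coe_singleton, add_comm, Multiset.singleton_add,
        List.getElem_ofFn]
    rw [htake]
    exact .cons ((isShortExact_subquot (hmono i.castSucc_lt_succ.le)).congr_right e) ih

theorem exists_hasFiltrationWithSections_range {s : Multiset ι} (h : IsFilteredBy D s A)
    {a : A →ₗ[S] M} (ha : Function.Injective a) :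
    ∃ (n : ℕ) (f : Fin (n + 1) → Submodule S M) (g : Fin n → ι),
      Monotone f ∧ f 0 = ⊥ ∧ f (Fin.last n) = LinearMap.range a ∧
        ∀ i, Nonempty (subquot S (f i.castSucc) (f i.succ) ≃ₗ[S] D (g i)) := by
  induction h with
  | zero hA =>
    refine ⟨0, fun _ => ⊥, Fin.elim0, monotone_const, rfl, ?_, Fin.rec0⟩
    rw [LinearMap.range_eq_bot.2 (Subsingleton.elim a 0)]
  | @cons A B _ i c b hcb _ ih =>
    obtain ⟨n, f, g, hmono, hbot, hlast, hsec⟩ := ih (a := a ∘ₗ c) (ha.comp hcb.injective)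
    refine ⟨n + 1, Fin.snoc (α := fun _ => Submodule S M) f (LinearMap.range a),
      Fin.snoc (α := fun _ => ι) g i, ?_, ?_, Fin.snoc_last .., ?_⟩
    · refine Fin.monotone_iff_le_succ.2 (Fin.lastCases ?_ fun j => ?_)
      · rw [Fin.succ_last, Fin.snoc_last, Fin.snoc_castSucc, hlast]
        exact LinearMap.range_comp_le_range c a
      · rw [Fin.succ_castSucc, Fin.snoc_castSucc, Fin.snoc_castSucc]
        exact hmono j.castSucc_lt_succ.le
    · rw [← Fin.castSucc_zero, Fin.snoc_castSucc, hbot]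
    · refine Fin.lastCases ?_ fun j => ?_
      · rw [Fin.succ_last, Fin.snoc_last, Fin.snoc_castSucc, Fin.snoc_last, hlast]
        exact hcb.nonempty_subquot_range_equiv ha
      · rw [Fin.succ_castSucc, Fin.snoc_castSucc, Fin.snoc_castSucc, Fin.snoc_castSucc]
        exact hsec j

end IsFilteredBy

/-- `M ∈ F(D)`: `M` has a finite filtration with sections among the modules `D i`. -/
def HasFiltrationBy (D : ι → ModuleCat.{0} S) (M : ModuleCat.{0} S) : Prop :=
  ∃ s, IsFilteredBy D s M

theorem hasFiltrationBy_iff : HasFiltrationBy D M ↔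
    ∃ (n : ℕ) (f : Fin (n + 1) → Submodule S M) (g : Fin n → ι),
      HasFiltrationWithSections S M n f fun i => D (g i) := by
  refine ⟨fun ⟨s, h⟩ => ?_, fun ⟨_, _, _, h⟩ => ⟨_, .of_hasFiltrationWithSections h⟩⟩
  obtain ⟨n, f, g, hmono, hbot, htop, hsec⟩ :=
    h.exists_hasFiltrationWithSections_range (a := LinearMap.id) Function.injective_id
  exact ⟨n, f, g, hmono, hbot, htop.trans LinearMap.range_id, hsec⟩

/-- The direct sum of `n` copies of `M`, as an object of the module category. -/
abbrev modulePow (M : ModuleCat.{0} S) (n : ℕ) : ModuleCat.{0} S :=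
  ModuleCat.of S (Fin n → M)

namespace HasFiltrationBy

theorem of_subsingleton (h : Subsingleton M) : HasFiltrationBy D M :=
  ⟨0, .zero h⟩

theorem congr (h : HasFiltrationBy D A) (e : A ≃ₗ[S] B) : HasFiltrationBy D B :=
  h.imp fun _ h => h.congr e

theorem single (i : ι) : HasFiltrationBy D (D i) :=
  ⟨_, .single i⟩

theorem ext {a : A →ₗ[S] B} {b : B →ₗ[S] C} (hA : HasFiltrationBy D A)
    (h : IsShortExact a b) (hC : HasFiltrationBy D C) : HasFiltrationBy D B :=
  let ⟨_, hA⟩ := hA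
  let ⟨_, hC⟩ := hC
  ⟨_, .add h hA hC⟩

theorem induction {motive : ModuleCat.{0} S → Prop}
    (zero : ∀ M : ModuleCat.{0} S, Subsingleton M → motive M)
    (cons : ∀ (i : ι) (A B : ModuleCat.{0} S) (a : A →ₗ[S] B) (b : B →ₗ[S] D i),
      IsShortExact a b → HasFiltrationBy D A → motive A → motive B)
    (h : HasFiltrationBy D M) : motive M := by
  obtain ⟨s, h⟩ := h
  induction h with
  | zero h => exact zero _ h
  | cons h hA ih => exact cons _ _ _ _ _ h ⟨_, hA⟩ ih

theorem pow (h : HasFiltrationBy D M) (n : ℕ) :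
    HasFiltrationBy D (modulePow M n) := by
  induction n with
  | zero => exact of_subsingleton (inferInstanceAs (Subsingleton (Fin 0 → M)))
  | succ n ih =>
    exact (h.ext (isShortExact_inl_snd M (modulePow M n)) ih).congr
      (Fin.consLinearEquiv S fun _ => M)

end HasFiltrationBy

end Filtration

section Resolution

variable {S : Type} [Ring S] {C 𝒟 : ModuleCat.{0} S → Prop} {X Y : ModuleCat.{0} S} {d : ℕ}

/-- `X` has a resolution `0 → M_d → ⋯ → M_0 → X → 0` with all `M_i` in the class `C`, given as a
splice of short exact sequences. -/
def HasResolution (C : ModuleCat.{0} S → Prop) : ℕ → ModuleCat.{0} S → Prop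
  | 0, X => C X
  | d + 1, X => ∃ (K M : ModuleCat.{0} S) (f : K →ₗ[S] M) (g : M →ₗ[S] X),
      IsShortExact f g ∧ C M ∧ HasResolution C d K

theorem HasResolution.congr (hC : ∀ {A B : ModuleCat.{0} S}, C A → (A ≃ₗ[S] B) → C B)
    (h : HasResolution C d X) (e : X ≃ₗ[S] Y) : HasResolution C d Y := by
  cases d with
  | zero => exact hC h e
  | succ d =>
    obtain ⟨K, M, f, g, hfg, hM, hK⟩ := h
    exact ⟨K, M, f, _, hfg.congr_right e, hM, hK⟩

/-- A sequence `M₀ → M₁ → ⋯` that is exact at every term but the first. -/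
structure ExactSequence (S : Type) [Ring S] where
  obj : ℕ → ModuleCat.{0} S
  map (n : ℕ) : obj n →ₗ[S] obj (n + 1)
  exact (n : ℕ) : Function.Exact (map n) (map (n + 1))

namespace ExactSequence

/-- The sequence `X → 0 → 0 → ⋯`. -/
def single (X : ModuleCat.{0} S) : ExactSequence S where
  obj
    | 0 => X
    | _ + 1 => ModuleCat.of S PUnit
  map _ := 0
  exact _ _ := ⟨fun _ => ⟨0, Subsingleton.elim (α := PUnit) _ _⟩, fun _ => rfl⟩

/-- The sequence `M → M₀ → M₁ → ⋯` obtained by prepending a map `u : M → M₀`. -/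
def cons (E : ExactSequence S) {M : ModuleCat.{0} S} (u : M →ₗ[S] E.obj 0)
    (hu : Function.Exact u (E.map 0)) : ExactSequence S where
  obj
    | 0 => M
    | n + 1 => E.obj n
  map
    | 0 => u
    | n + 1 => E.map n
  exact
    | 0 => hu
    | n + 1 => E.exact n

end ExactSequence

theorem HasResolution.exists_exactSequence (h : HasResolution C d X) (E : ExactSequence S)
    {a : X →ₗ[S] E.obj 0} (ha : Function.Injective a) (haE : Function.Exact a (E.map 0)) {j m : ℕ}
    (hE : ∀ i < j, C (E.obj i)) (hlast : Subsingleton (E.obj (j + 1))) (hm : j + d = m) :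
    ∃ E' : ExactSequence S, Function.Injective (E'.map 0) ∧ E'.obj (m + 1) = E.obj j ∧
      (∀ i < m + 1, C (E'.obj i)) ∧ Subsingleton (E'.obj (m + 2)) := by
  induction d generalizing X E j with
  | zero =>
    subst hm
    exact ⟨E.cons a haE, ha, rfl, Nat.rec (fun _ => h) fun i _ hi => hE i (by omega), hlast⟩
  | succ d ih =>
    obtain ⟨K, M, f, g, hfg, hM, hK⟩ := h
    have hexact : Function.Exact (a ∘ₗ g) (E.map 0) := by
      rw [LinearMap.exact_iff, LinearMap.range_comp, LinearMap.range_eq_top.2 hfg.surjective,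
        Submodule.map_top]
      exact haE.linearMap_ker_eq
    have hexact' : Function.Exact f (a ∘ₗ g) := by
      rw [LinearMap.exact_iff, LinearMap.ker_comp, LinearMap.ker_eq_bot.2 ha]
      exact hfg.exact.linearMap_ker_eq
    exact ih hK (E.cons (a ∘ₗ g) hexact) hfg.injective hexact' (j := j + 1)
      (Nat.rec (fun _ => hM) fun i _ hi => hE i (by omega)) hlast (by omega)

theorem hasResolution_iff_exists_isExactSeq
    (hC : ∀ {A B : ModuleCat.{0} S}, C A → (A ≃ₗ[S] B) → C B) :
    HasResolution C d X ↔ ∃ (N : Fin (d + 2) → ModuleCat.{0} S)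
      (f : ∀ i : Fin (d + 1), N i.castSucc →ₗ[S] N i.succ),
      IsExactSeq S d N f ∧ N (Fin.last (d + 1)) = X ∧ ∀ i : Fin (d + 1), C (N i.castSucc) := by
  constructor
  · intro h
    obtain ⟨E, hinj, rfl, hE, hlast⟩ := h.exists_exactSequence (.single X) (a := LinearMap.id)
      Function.injective_id (fun x => ⟨fun _ => ⟨x, rfl⟩, fun _ => rfl⟩) (j := 0)
      (fun _ hi => absurd hi (Nat.not_lt_zero _))
      (inferInstanceAs (Subsingleton PUnit)) (zero_add d)
    exact ⟨fun i => E.obj i, fun i => E.map i,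
      ⟨hinj, fun x => (E.exact d x).1 (Subsingleton.elim _ _),
        fun i => (E.exact i).linearMap_ker_eq.symm⟩, rfl, fun i => hE i i.is_lt⟩
  · rintro ⟨N, f, ⟨hinj, hsurj, hexact⟩, rfl, hN⟩
    suffices ∀ j : Fin (d + 1), HasResolution C j (ModuleCat.of S (LinearMap.range (f j))) from
      (this (Fin.last d)).congr hC (LinearEquiv.ofTop _ (LinearMap.range_eq_top.2 hsurj))
    intro j
    induction j using Fin.induction with
    | zero => exact hC (hN 0) (LinearEquiv.ofInjective (f 0) hinj)
    | succ i ih =>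
      rw [hexact i] at ih
      refine ⟨_, _, (LinearMap.ker (f i.succ)).subtype, (f i.succ).rangeRestrict,
        ⟨Submodule.injective_subtype _, (f i.succ).surjective_rangeRestrict, ?_⟩, hN _, ih⟩
      rw [LinearMap.exact_iff, LinearMap.ker_rangeRestrict, Submodule.range_subtype]

theorem hasResolution_iff {E : ℕ → ModuleCat.{0} S → Prop}
    (hCE : ∀ X, C X → E 0 X) (hEC : ∀ X, 𝒟 X → E 0 X → C X)
    (hE : ∀ (d : ℕ) (K M X : ModuleCat.{0} S) (f : K →ₗ[S] M) (g : M →ₗ[S] X),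
      IsShortExact f g → C M → (E (d + 1) X ↔ E d K))
    (hcover : ∀ X, 𝒟 X → ∃ (K M : ModuleCat.{0} S) (f : K →ₗ[S] M) (g : M →ₗ[S] X),
      IsShortExact f g ∧ C M ∧ 𝒟 K)
    (hX : 𝒟 X) : HasResolution C d X ↔ E d X := by
  constructor
  · clear hX
    intro h
    induction d generalizing X with
    | zero => exact hCE X h
    | succ d ih =>
      obtain ⟨K, M, f, g, hfg, hM, hK⟩ := h
      exact (hE d K M X f g hfg hM).2 (ih hK)
  · intro h
    induction d generalizing X with
    | zero => exact hEC X hX h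
    | succ d ih =>
      obtain ⟨K, M, f, g, hfg, hM, hK⟩ := hcover X hX
      exact ⟨K, M, f, g, hfg, hM, ih hK ((hE d K M X f g hfg hM).1 h)⟩

theorem projdimLE_iff : ProjdimLE S X d ↔ HasProjectiveDimensionLE X d := by
  have hzero (X : ModuleCat.{0} S) : Module.Projective S X ↔ HasProjectiveDimensionLE X 0 := by
    rw [← projective_iff_hasProjectiveDimensionLE_zero, ← IsProjective.iff_projective]
  rw [ProjdimLE, ← hasResolution_iff_exists_isExactSeq (C := fun M => Module.Projective S M)
    fun h e => have := h; .of_equiv e]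
  refine hasResolution_iff (𝒟 := fun _ => True) (E := fun d X => HasProjectiveDimensionLE X d)
    (fun X => (hzero X).1) (fun X _ => (hzero X).2) ?_ ?_ trivial
  · intro d K M X f g hfg hM
    exact hfg.shortExact.hasProjectiveDimensionLT_X₃_iff d
      ((IsProjective.iff_projective _).1 hM)
  · intro X _
    exact ⟨_, ModuleCat.of S (X →₀ S), _, Finsupp.linearCombination S id,
      isShortExact_ker_subtype (Finsupp.linearCombination_id_surjective S X),
      inferInstanceAs (Module.Projective S (X →₀ S)), trivial⟩

end Resolution

section HomFunctor

variable {S : Type} [Ring S] {A B C : ModuleCat.{0} S}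

/-- The action of the functor `Hom_S(T, -)` on maps. -/
def homMap (T : ModuleCat.{0} S) (h : A →ₗ[S] B) :
    homTMod S T A →ₗ[RingelDualRing S T] homTMod S T B where
  toFun u := LinearMap.comp h u
  map_add' _ _ := LinearMap.comp_add _ _ h
  map_smul' _ _ := rfl

theorem IsShortExact.homMap {T : ModuleCat.{0} S} {f : A →ₗ[S] B} {g : B →ₗ[S] C}
    (h : IsShortExact f g) (hlift : ∀ v : T →ₗ[S] C, ∃ w : T →ₗ[S] B, g ∘ₗ w = v) :
    IsShortExact (homMap T f) (homMap T g) where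
  injective _ _ huv := LinearMap.ext fun x => h.injective (LinearMap.congr_fun huv x)
  surjective := hlift
  exact u := by
    refine ⟨h.exists_factor (X := T) u, ?_⟩
    rintro ⟨v, rfl⟩
    exact LinearMap.ext fun x => LinearMap.congr_fun h.comp_eq_zero _

end HomFunctor

section CompositionFactors

variable {S Λ : Type} [Ring S] [Fintype Λ] [PartialOrder Λ] (Q : QHData S Λ)
  {A B C M : ModuleCat.{0} S} {κ μ : Λ}

theorem ne_zero_of_surjective [Nontrivial B] {g : A →ₗ[S] B} (hg : Function.Surjective g) :
    g ≠ 0 := by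
  rintro rfl
  obtain ⟨y, hy⟩ := exists_ne (0 : B)
  obtain ⟨x, rfl⟩ := hg y
  exact hy rfl

namespace QHData

instance (κ : Λ) : IsSimpleModule S (Q.L κ) :=
  Q.simpleL κ

theorem projective_P (κ : Λ) : Module.Projective S (Q.P κ) :=
  (Q.projCover κ).1

theorem exists_P_lift (κ : Λ) {g : B →ₗ[S] C} (hg : Function.Surjective g)
    (v : Q.P κ →ₗ[S] C) : ∃ w : Q.P κ →ₗ[S] B, g ∘ₗ w = v :=
  have := Q.projective_P κ
  Module.projective_lifting_property g v hg

theorem exists_top_P (κ : Λ) : ∃ π : Q.P κ →ₗ[S] Q.L κ,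
    Function.Surjective π ∧ ∀ N : Submodule S (Q.P κ), N ≠ ⊤ → N ≤ LinearMap.ker π := by
  obtain ⟨-, π, hπ, hsup⟩ := Q.projCover κ
  refine ⟨π, hπ, fun N hN => by_contra fun hle => hN (hsup N ?_)⟩
  have hcoatom : IsCoatom (LinearMap.ker π) := by
    rw [← isSimpleModule_iff_isCoatom]
    exact .congr (π.quotKerEquivOfSurjective hπ)
  exact hcoatom.2 _ (right_lt_sup.2 hle)

theorem exists_top_of_surjective [Nontrivial M] {q : Q.P κ →ₗ[S] M}
    (hq : Function.Surjective q) : ∃ t : M →ₗ[S] Q.L κ,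
      Function.Surjective t ∧ ∀ N : Submodule S M, N ≠ ⊤ → N ≤ LinearMap.ker t := by
  obtain ⟨π, hπ, htop⟩ := Q.exists_top_P κ
  have hker := htop (LinearMap.ker q) fun h => ne_zero_of_surjective hq (LinearMap.ker_eq_top.1 h)
  obtain ⟨t, rfl⟩ := (isShortExact_ker_subtype hq).exists_desc π
    (LinearMap.ext fun x => hker x.2)
  refine ⟨t, .of_comp hπ, fun N hN => ?_⟩
  have hle := htop (N.comap q) fun h => hN (by
    rw [← Submodule.map_comap_eq_of_surjective hq N, h, Submodule.map_top,
      LinearMap.range_eq_top.2 hq])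
  rw [LinearMap.ker_comp] at hle
  exact (Submodule.comap_le_comap_iff_of_surjective hq).1 hle

theorem exists_range_surjective_L {h : Q.P κ →ₗ[S] M} (hh : h ≠ 0) :
    ∃ v : LinearMap.range h →ₗ[S] Q.L κ, Function.Surjective v := by
  have : Nontrivial (ModuleCat.of S (LinearMap.range h)) :=
    Submodule.nontrivial_iff_ne_bot.2 fun h0 => hh (LinearMap.range_eq_bot.1 h0)
  obtain ⟨v, hv, -⟩ := Q.exists_top_of_surjective (M := ModuleCat.of S (LinearMap.range h))
    h.surjective_rangeRestrict
  exact ⟨v, hv⟩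

/-- The multiplicity `[M : L κ]`, computed as the length of `Hom_S(P κ, M)` over `End_S(P κ)ᵒᵖ`. -/
noncomputable def factorMult (κ : Λ) (M : ModuleCat.{0} S) : ℕ∞ :=
  Module.length (RingelDualRing S (Q.P κ)) (homTMod S (Q.P κ) M)

theorem factorMult_eq_zero_iff : Q.factorMult κ M = 0 ↔ ∀ h : Q.P κ →ₗ[S] M, h = 0 := by
  rw [factorMult, Module.length_eq_zero_iff, subsingleton_iff_forall_eq 0]
  rfl

theorem factorMult_ne_zero_iff : Q.factorMult κ M ≠ 0 ↔ ∃ h : Q.P κ →ₗ[S] M, h ≠ 0 := by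
  rw [Ne, factorMult_eq_zero_iff, not_forall]

theorem factorMult_eq_add {f : A →ₗ[S] B} {g : B →ₗ[S] C} (h : IsShortExact f g) :
    Q.factorMult κ B = Q.factorMult κ A + Q.factorMult κ C :=
  have h' := h.homMap (Q.exists_P_lift κ h.surjective)
  Module.length_eq_add_of_exact _ _ h'.injective h'.surjective h'.exact

theorem factorMult_le_of_injective {f : A →ₗ[S] B} (hf : Function.Injective f) :
    Q.factorMult κ A ≤ Q.factorMult κ B := by
  rw [Q.factorMult_eq_add (isShortExact_range_mkQ hf)]
  exact le_self_add

theorem factorMult_le_of_surjective {g : B →ₗ[S] C} (hg : Function.Surjective g) :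
    Q.factorMult κ C ≤ Q.factorMult κ B := by
  rw [Q.factorMult_eq_add (isShortExact_ker_subtype hg)]
  exact le_add_self

theorem factorMult_congr (e : A ≃ₗ[S] B) : Q.factorMult κ A = Q.factorMult κ B :=
  (Q.factorMult_le_of_injective e.injective).antisymm (Q.factorMult_le_of_surjective e.surjective)

theorem factorMult_of_subsingleton [Subsingleton M] : Q.factorMult κ M = 0 :=
  Q.factorMult_eq_zero_iff.2 fun _ => Subsingleton.elim _ _

theorem exists_ne_zero_P_L (κ : Λ) : ∃ h : Q.P κ →ₗ[S] Q.L κ, h ≠ 0 := by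
  obtain ⟨π, hπ, -⟩ := Q.exists_top_P κ
  have := IsSimpleModule.nontrivial S (Q.L κ)
  exact ⟨π, ne_zero_of_surjective hπ⟩

theorem factorMult_L_self (κ : Λ) : Q.factorMult κ (Q.L κ) = 1 := by
  rw [factorMult, Module.length_eq_one_iff, isSimpleModule_iff_toSpanSingleton_surjective]
  refine ⟨?_, fun u hu v => ?_⟩
  · obtain ⟨h, hh⟩ := Q.exists_ne_zero_P_L κ
    exact ⟨h, 0, hh⟩
  · obtain ⟨a, ha⟩ := Q.exists_P_lift κ (LinearMap.surjective_of_ne_zero hu) v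
    exact ⟨MulOpposite.op a, ha⟩

theorem factorMult_L_of_ne (h : κ ≠ μ) : Q.factorMult κ (Q.L μ) = 0 := by
  refine Q.factorMult_eq_zero_iff.2 fun u => by_contra fun hu => ?_
  obtain ⟨v, hv⟩ := Q.exists_range_surjective_L hu
  let e := LinearEquiv.ofTop _ (LinearMap.range_eq_top.2 (LinearMap.surjective_of_ne_zero hu))
  have hw : Function.Surjective (v ∘ₗ e.symm.toLinearMap) := hv.comp e.symm.surjective
  have := IsSimpleModule.nontrivial S (Q.L κ)
  exact (Q.nonisoL κ μ h).false (LinearEquiv.ofBijective _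
    (LinearMap.bijective_of_ne_zero (ne_zero_of_surjective hw))).symm

theorem factorMult_L_ne_zero_iff : Q.factorMult κ (Q.L μ) ≠ 0 ↔ κ = μ := by
  refine ⟨fun h => by_contra fun hne => h (Q.factorMult_L_of_ne hne), ?_⟩
  rintro rfl
  rw [factorMult_L_self]
  exact one_ne_zero

theorem isCompFactor_iff : IsCompFactor S (Q.L κ) M ↔ Q.factorMult κ M ≠ 0 := by
  constructor
  · rintro ⟨X, Y, hXY, ⟨e⟩⟩ h0
    have hY : Q.factorMult κ (ModuleCat.of S Y) = 0 :=
      le_zero_iff.1 (h0 ▸ Q.factorMult_le_of_injective (A := ModuleCat.of S Y) Y.injective_subtype)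
    have h := Q.factorMult_eq_add ((isShortExact_subquot hXY).congr_right e) (κ := κ)
    rw [factorMult_L_self, hY] at h
    exact one_ne_zero (add_eq_zero.1 h.symm).2
  · rw [factorMult_ne_zero_iff]
    rintro ⟨h, hh⟩
    obtain ⟨v, hv⟩ := Q.exists_range_surjective_L hh
    refine ⟨(LinearMap.ker v).map (Submodule.subtype _), LinearMap.range h,
      Submodule.map_subtype_le _ _, ⟨(Submodule.quotEquivOfEq _ _ ?_).trans
        (v.quotKerEquivOfSurjective hv)⟩⟩
    exact Submodule.comap_map_eq_of_injective (Submodule.injective_subtype _) _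

theorem factorMult_eq_sum {ι : Type} {D : ι → ModuleCat.{0} S} {s : Multiset ι}
    (h : IsFilteredBy D s M) : Q.factorMult κ M = (s.map fun i => Q.factorMult κ (D i)).sum := by
  induction h with
  | zero _ => exact Q.factorMult_of_subsingleton
  | cons hab _ ih =>
    rw [Q.factorMult_eq_add hab, ih, Multiset.map_cons, Multiset.sum_cons, add_comm]

theorem factorMult_of_compFactorMult {m : ℕ} (h : CompFactorMult S (Q.L κ) M m) :
    Q.factorMult κ M = m := by
  classical
  obtain ⟨n, f, hmono, hbot, htop, hsimple, hcard⟩ := h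
  choose g hg using fun i : Fin n =>
    Q.fullL (ModuleCat.of S (subquot S (f i.castSucc) (f i.succ))) (hsimple i)
  have hmult (i : Fin n) : Q.factorMult κ (Q.L (g i)) =
      if Nonempty (subquot S (f i.castSucc) (f i.succ) ≃ₗ[S] Q.L κ) then 1 else 0 := by
    obtain ⟨e⟩ := hg i
    split_ifs with h
    · obtain ⟨e'⟩ := h
      rw [← Q.factorMult_L_self κ]
      exact Q.factorMult_congr (e.symm.trans e')
    · refine Q.factorMult_L_of_ne ?_
      rintro rfl
      exact h ⟨e⟩
  rw [Q.factorMult_eq_sum (.of_hasFiltrationWithSections (D := Q.L) ⟨hmono, hbot, htop, hg⟩),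
    Multiset.map_coe, Multiset.sum_coe, List.map_ofFn, List.sum_ofFn, ← hcard,
    Nat.card_eq_fintype_card, Fintype.card_subtype, Finset.card_filter, Nat.cast_sum]
  exact Finset.sum_congr rfl fun i _ => by
    rw [Function.comp_apply, hmult, Nat.cast_ite, Nat.cast_one, Nat.cast_zero]

theorem hasFiltrationBy_L (hM : IsFiniteLength S M) : HasFiltrationBy Q.L M := by
  suffices ∀ (N : Type) [AddCommGroup N] [Module S N], IsFiniteLength S N →
      HasFiltrationBy Q.L (ModuleCat.of S N) from this M hM
  intro N _ _ hN
  induction hN with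
  | of_subsingleton => exact .of_subsingleton (by assumption)
  | @of_simple_quotient N _ _ N' hsimple _ ih =>
    obtain ⟨κ, ⟨e⟩⟩ := Q.fullL (ModuleCat.of S (N ⧸ N')) hsimple
    have h := isShortExact_subtype_mkQ (B := ModuleCat.of S N) N'
    exact ih.ext h ((HasFiltrationBy.single κ).congr e.symm)

theorem compFactorMult_iff (hM : IsFiniteLength S M) {m : ℕ} :
    CompFactorMult S (Q.L κ) M m ↔ Q.factorMult κ M = m := by
  refine ⟨Q.factorMult_of_compFactorMult, fun hm => ?_⟩
  obtain ⟨n, f, g, hmono, hbot, htop, hsec⟩ := hasFiltrationBy_iff.1 (Q.hasFiltrationBy_L hM)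
  have hmult : CompFactorMult S (Q.L κ) M _ :=
    ⟨n, f, hmono, hbot, htop, fun i => .congr (hsec i).some, rfl⟩
  rwa [Nat.cast_injective (hm.symm.trans (Q.factorMult_of_compFactorMult hmult))]

end QHData

end CompositionFactors

section StandardModules

variable {S Λ : Type} [Ring S] [Fintype Λ] [PartialOrder Λ] (Q : QHData S Λ)
  {A B C M : ModuleCat.{0} S} {κ lam μ : Λ}

namespace QHData

theorem exists_surjective_P_std (lam : Λ) : ∃ q : Q.P lam →ₗ[S] Q.std lam,
    Function.Surjective q := by
  obtain ⟨K, ⟨e⟩, -⟩ := Q.stdSpec lam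
  exact ⟨e.symm.toLinearMap ∘ₗ K.mkQ, e.symm.surjective.comp K.mkQ_surjective⟩

theorem le_of_factorMult_std_ne_zero (h : Q.factorMult κ (Q.std lam) ≠ 0) : κ ≤ lam := by
  obtain ⟨K, ⟨e⟩, hK, -⟩ := Q.stdSpec lam
  refine hK κ (Q.isCompFactor_iff.2 ?_)
  rwa [← Q.factorMult_congr (B := ModuleCat.of S (Q.P lam ⧸ K)) e]

theorem le_of_factorMult_costd_ne_zero (h : Q.factorMult κ (Q.costd lam) ≠ 0) : κ ≤ lam := by
  obtain ⟨K, ⟨e⟩, hK, -⟩ := Q.costdSpec lam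
  refine hK κ (Q.isCompFactor_iff.2 ?_)
  rwa [← Q.factorMult_congr (B := ModuleCat.of S K) e]

theorem factorMult_std_self (lam : Λ) : Q.factorMult lam (Q.std lam) = 1 :=
  Q.factorMult_of_compFactorMult (Q.multOne lam)

instance finite_P (κ : Λ) : Module.Finite S (Q.P κ) := by
  obtain ⟨π, hπ, htop⟩ := Q.exists_top_P κ
  have := IsSimpleModule.nontrivial S (Q.L κ)
  obtain ⟨y, hy⟩ := exists_ne (0 : Q.L κ)
  obtain ⟨x, rfl⟩ := hπ y
  have hx : Submodule.span S {x} = ⊤ := by_contra fun h =>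
    hy (htop _ h (Submodule.mem_span_singleton_self x))
  exact ⟨⟨{x}, by rw [Finset.coe_singleton, hx]⟩⟩

instance finite_std (lam : Λ) : Module.Finite S (Q.std lam) :=
  have ⟨_, hq⟩ := Q.exists_surjective_P_std lam
  .of_surjective _ hq

instance nontrivial_std (lam : Λ) : Nontrivial (Q.std lam) :=
  not_subsingleton_iff_nontrivial.1 fun _ =>
    zero_ne_one (Q.factorMult_of_subsingleton.symm.trans (Q.factorMult_std_self lam))

theorem exists_top_std (lam : Λ) : ∃ t : Q.std lam →ₗ[S] Q.L lam,
    Function.Surjective t ∧ ∀ N : Submodule S (Q.std lam), N ≠ ⊤ → N ≤ LinearMap.ker t := by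
  obtain ⟨q, hq⟩ := Q.exists_surjective_P_std lam
  exact Q.exists_top_of_surjective hq

theorem lt_of_factorMult_ker_std_ne_zero {t : Q.std lam →ₗ[S] Q.L lam}
    (ht : Function.Surjective t)
    (h : Q.factorMult κ (ModuleCat.of S (LinearMap.ker t)) ≠ 0) : κ < lam := by
  have hadd := Q.factorMult_eq_add (isShortExact_ker_subtype ht) (κ := κ)
  have hle : κ ≤ lam := Q.le_of_factorMult_std_ne_zero fun h0 =>
    h (add_eq_zero.1 (hadd.symm.trans h0)).1
  refine hle.lt_of_ne ?_
  rintro rfl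
  rw [factorMult_std_self, factorMult_L_self] at hadd
  exact h (ENat.add_left_injective_of_ne_top ENat.one_ne_top (hadd.symm.trans (zero_add 1).symm))

theorem exists_isShortExact_P_std (lam : Λ) : ∃ (K : ModuleCat.{0} S) (f : K →ₗ[S] Q.P lam)
    (q : Q.P lam →ₗ[S] Q.std lam) (s : Multiset Λ),
    IsShortExact f q ∧ IsFilteredBy Q.std s K ∧ ∀ ν ∈ s, lam < ν := by
  classical
  obtain ⟨n, f, g, hfilt, hle, hcard⟩ := Q.projFilt lam
  have hle' : ∀ ν ∈ (List.ofFn g : Multiset Λ), lam ≤ ν := by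
    rintro ν hν
    obtain ⟨i, rfl⟩ := List.mem_ofFn.1 (Multiset.mem_coe.1 hν)
    exact hle i
  have hcount : Multiset.count lam (List.ofFn g : Multiset Λ) = 1 := by
    rw [← Fin.univ_val_map, Multiset.count_map, ← hcard, Nat.card_eq_fintype_card,
      Fintype.card_subtype]
    simp_rw [eq_comm (a := lam)]
    rfl
  have hP := IsFilteredBy.of_hasFiltrationWithSections hfilt
  generalize (List.ofFn g : Multiset Λ) = s at hle' hcount hP
  cases hP with
  | zero => exact absurd hcount (by rw [Multiset.count_zero]; exact zero_ne_one)
  | @cons A _ s i a b hab hA =>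
    obtain ⟨t, ht, -⟩ := Q.exists_top_std i
    have := IsSimpleModule.nontrivial S (Q.L i)
    obtain rfl : lam = i := Q.factorMult_L_ne_zero_iff.1 <| Q.factorMult_ne_zero_iff.2
      ⟨t ∘ₗ b, ne_zero_of_surjective (ht.comp hab.surjective)⟩
    rw [Multiset.count_cons_self, Nat.add_eq_right, Multiset.count_eq_zero] at hcount
    refine ⟨A, a, b, s, hab, hA, fun ν hν => (hle' ν (Multiset.mem_cons_of_mem hν)).lt_of_ne ?_⟩
    rintro rfl
    exact hcount hν

theorem hom_std_eq_zero (h : Q.factorMult lam M = 0) (u : Q.std lam →ₗ[S] M) : u = 0 := by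
  obtain ⟨q, hq⟩ := Q.exists_surjective_P_std lam
  exact (LinearMap.cancel_right hq).1 (Q.factorMult_eq_zero_iff.1 h (u ∘ₗ q))

theorem extVanishes_one_std (h : ∀ ν, lam < ν → Q.factorMult ν M = 0) :
    ExtVanishes 1 (Q.std lam) M := by
  obtain ⟨K, f, q, s, hfq, hK, hs⟩ := Q.exists_isShortExact_P_std lam
  refine hfq.extVanishes_one_of_exists_extend (fun v => ⟨0, ?_⟩)
    (.of_projective (Q.projective_P lam))
  rw [LinearMap.zero_comp]
  exact (hK.hom_eq_zero (fun ν hν => Q.hom_std_eq_zero (h ν (hs ν hν))) v).symm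

theorem exists_socle_I (lam : Λ) : ∃ j : Q.L lam →ₗ[S] Q.I lam, Function.Injective j ∧
    ∀ N : Submodule S (Q.I lam), N ≠ ⊥ → LinearMap.range j ≤ N := by
  obtain ⟨-, j, hj, hess⟩ := Q.injHull lam
  refine ⟨j, hj, fun N hN => ?_⟩
  have hatom : IsAtom (LinearMap.range j) := by
    rw [← isSimpleModule_iff_isAtom]
    exact .congr (LinearEquiv.ofInjective j hj).symm
  exact by_contra fun hle => hN (hess N (by
    rw [inf_comm]
    exact hatom.2 _ (inf_lt_left.2 hle)))

theorem exists_isShortExact_costd_I (lam : Λ) : ∃ (C : ModuleCat.{0} S)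
    (i : Q.costd lam →ₗ[S] Q.I lam) (p : Q.I lam →ₗ[S] C), IsShortExact i p ∧
      ∀ M : ModuleCat.{0} S, (∀ κ, Q.factorMult κ M ≠ 0 → κ ≤ lam) → ∀ v : M →ₗ[S] C, v = 0 := by
  obtain ⟨V, ⟨e⟩, hV, hmax⟩ := Q.costdSpec lam
  have hVI := isShortExact_subtype_mkQ V
  refine ⟨_, _, _, hVI.congr_left e, fun M hM v => ?_⟩
  obtain ⟨B, f, g, b, hfg, hb, hcomm⟩ :=
    hVI.exists_pullback (isShortExact_subtype_mkQ (LinearMap.range v))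
  have hB : LinearMap.range b ≤ V := by
    refine hmax _ fun κ hκ => ?_
    rw [isCompFactor_iff, ← Q.factorMult_congr (A := B) (LinearEquiv.ofInjective b hb.injective),
      Q.factorMult_eq_add hfg, Ne, add_eq_zero, not_and_or] at hκ
    rcases hκ with hκ | hκ
    · exact hV κ (Q.isCompFactor_iff.2 hκ)
    · exact hM κ fun h0 => hκ (le_zero_iff.1 (h0 ▸ Q.factorMult_le_of_surjective
        (C := ModuleCat.of S (LinearMap.range v)) v.surjective_rangeRestrict))
  have hzero : (LinearMap.range v).subtype ∘ₗ g = 0 :=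
    hcomm.trans (LinearMap.range_le_ker_iff.1 (by rwa [V.ker_mkQ]))
  ext x
  obtain ⟨y, hy⟩ := hfg.surjective ⟨v x, x, rfl⟩
  exact (congrArg Subtype.val hy).symm.trans (LinearMap.congr_fun hzero y)

theorem extVanishes_one_costd (h : ∀ κ, Q.factorMult κ M ≠ 0 → κ ≤ lam) :
    ExtVanishes 1 M (Q.costd lam) := by
  obtain ⟨C, i, p, hip, hC⟩ := Q.exists_isShortExact_costd_I lam
  refine hip.extVanishes_one_of_exists_lift (fun v => ⟨0, ?_⟩) (.of_injective (Q.injHull lam).1)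
  rw [LinearMap.comp_zero, hC M h v]

theorem exists_socle_costd (lam : Λ) : ∃ j : Q.L lam →ₗ[S] Q.costd lam, Function.Injective j ∧
    ∀ N : Submodule S (Q.costd lam), N ≠ ⊥ → LinearMap.range j ≤ N := by
  obtain ⟨C, i, p, hip, hC⟩ := Q.exists_isShortExact_costd_I lam
  obtain ⟨j, hj, hsoc⟩ := Q.exists_socle_I lam
  obtain ⟨j', rfl⟩ := hip.exists_factor j
    (hC _ (fun κ hκ => (Q.factorMult_L_ne_zero_iff.1 hκ).le) (p ∘ₗ j))
  refine ⟨j', .of_comp hj, fun N hN => ?_⟩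
  have hle := hsoc (N.map i) fun h0 =>
    hN (Submodule.map_injective_of_injective hip.injective (h0.trans (Submodule.map_bot i).symm))
  rwa [LinearMap.range_comp, Submodule.map_le_map_iff_of_injective hip.injective] at hle

instance nontrivial_costd (lam : Λ) : Nontrivial (Q.costd lam) :=
  have ⟨_, hj, _⟩ := Q.exists_socle_costd lam
  have := IsSimpleModule.nontrivial S (Q.L lam)
  hj.nontrivial

/- A map `P lam → ∇ lam / L lam` would lift through `Δ lam` to one whose image contains `L lam`
twice. -/
theorem lt_of_factorMult_costd_quotient_ne_zero {j : Q.L lam →ₗ[S] Q.costd lam}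
    (hj : Function.Injective j)
    (hsoc : ∀ N : Submodule S (Q.costd lam), N ≠ ⊥ → LinearMap.range j ≤ N)
    (h : Q.factorMult κ (ModuleCat.of S (Q.costd lam ⧸ LinearMap.range j)) ≠ 0) : κ < lam := by
  have hses := isShortExact_range_mkQ hj
  refine (Q.le_of_factorMult_costd_ne_zero fun h0 =>
    h (add_eq_zero.1 ((Q.factorMult_eq_add hses).symm.trans h0)).2).lt_of_ne ?_
  rintro rfl
  obtain ⟨u, hu⟩ := Q.factorMult_ne_zero_iff.1 h
  obtain ⟨w, rfl⟩ := Q.exists_P_lift κ hses.surjective u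
  obtain ⟨K, f, q, s, hfq, hK, hs⟩ := Q.exists_isShortExact_P_std κ
  obtain ⟨v, rfl⟩ := hfq.exists_desc w <| hK.hom_eq_zero (fun ν hν => Q.hom_std_eq_zero <|
    by_contra fun h0 => (hs ν hν).not_ge (Q.le_of_factorMult_costd_ne_zero h0)) _
  have hle := hsoc (LinearMap.range v) fun h0 => hu (by
    rw [LinearMap.range_eq_bot.1 h0, LinearMap.zero_comp, LinearMap.comp_zero])
  let j' : Q.L κ →ₗ[S] ModuleCat.of S (LinearMap.range v) :=
    Submodule.inclusion hle ∘ₗ j.rangeRestrict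
  have hj' : Function.Injective j' :=
    (Submodule.inclusion_injective hle).comp ((LinearMap.injective_rangeRestrict_iff _).2 hj)
  have hV := isShortExact_range_mkQ hj'
  have hone : 1 + Q.factorMult κ (ModuleCat.of S (_ ⧸ LinearMap.range j')) ≤ 1 + 0 := by
    rw [← Q.factorMult_L_self κ, ← Q.factorMult_eq_add hV, factorMult_L_self, add_zero,
      ← Q.factorMult_std_self κ]
    exact Q.factorMult_le_of_surjective v.surjective_rangeRestrict
  have hzero := Q.factorMult_eq_zero_iff.1 (le_zero_iff.1
    ((ENat.add_le_add_iff_left ENat.one_ne_top).1 hone)) (Submodule.mkQ _ ∘ₗ v.rangeRestrict ∘ₗ q)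
  refine hu (LinearMap.ext fun x => (Submodule.Quotient.mk_eq_zero _).2 ?_)
  obtain ⟨l, hl⟩ := (Submodule.Quotient.mk_eq_zero _).1 (LinearMap.congr_fun hzero x)
  exact ⟨l, congrArg Subtype.val hl⟩

end QHData

end StandardModules

section ExtOrthogonality

theorem IsShortExact.finite {S : Type} [Ring S] {A B C : ModuleCat.{0} S} {f : A →ₗ[S] B}
    {g : B →ₗ[S] C} (h : IsShortExact f g) (hA : Module.Finite S A) (hC : Module.Finite S C) :
    Module.Finite S B :=
  have : Module.Finite S (LinearMap.ker g) := by
    rw [LinearMap.exact_iff.1 h.exact]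
    infer_instance
  have : Module.Finite S (B ⧸ LinearMap.ker g) :=
    .equiv (g.quotKerEquivOfSurjective h.surjective).symm
  .of_submodule_quotient (LinearMap.ker g)

theorem HasFiltrationBy.finite {S ι : Type} [Ring S] {D : ι → ModuleCat.{0} S}
    {M : ModuleCat.{0} S} [∀ i, Module.Finite S (D i)] (h : HasFiltrationBy D M) :
    Module.Finite S M :=
  h.induction (motive := fun M => Module.Finite S M) (fun _ _ => inferInstance)
    fun _ _ _ _ _ h _ hA => h.finite hA inferInstance

theorem IsFilteredBy.extVanishes_left {S ι : Type} [Ring S] {D : ι → ModuleCat.{0} S}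
    {s : Multiset ι} {X Y : ModuleCat.{0} S} {n : ℕ} (h : IsFilteredBy D s X)
    (hD : ∀ i ∈ s, ExtVanishes n (D i) Y) : ExtVanishes n X Y := by
  induction h with
  | zero h => exact .of_subsingleton_left
  | cons hab _ ih =>
    exact hab.extVanishes_contravariant₂ (ih fun i hi => hD i (Multiset.mem_cons_of_mem hi))
      (hD _ (Multiset.mem_cons_self _ _))

theorem IsFilteredBy.extVanishes_right {S ι : Type} [Ring S] {D : ι → ModuleCat.{0} S}
    {s : Multiset ι} {X Y : ModuleCat.{0} S} {n : ℕ} (h : IsFilteredBy D s Y)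
    (hD : ∀ i ∈ s, ExtVanishes n X (D i)) : ExtVanishes n X Y := by
  induction h with
  | zero h => exact .of_subsingleton_right
  | cons hab _ ih =>
    exact hab.extVanishes_covariant₂ (ih fun i hi => hD i (Multiset.mem_cons_of_mem hi))
      (hD _ (Multiset.mem_cons_self _ _))

variable {S Λ : Type} [Ring S] [Fintype Λ] [PartialOrder Λ] (Q : QHData S Λ)
  {A B M N X Y : ModuleCat.{0} S} {κ lam μ : Λ} {n : ℕ}

namespace QHData

theorem extVanishes_std_costd (n : ℕ) (lam μ : Λ) :
    ExtVanishes (n + 1) (Q.std lam) (Q.costd μ) := by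
  induction n generalizing lam with
  | zero =>
    by_cases h : lam < μ
    · exact Q.extVanishes_one_costd fun κ hκ => (Q.le_of_factorMult_std_ne_zero hκ).trans h.le
    · exact Q.extVanishes_one_std fun ν hν => by_contra fun h0 =>
        h (hν.trans_le (Q.le_of_factorMult_costd_ne_zero h0))
  | succ n ih =>
    obtain ⟨K, f, q, s, hfq, hK, -⟩ := Q.exists_isShortExact_P_std lam
    exact hfq.extVanishes_contravariant₃ (hK.extVanishes_left fun ν _ => ih ν)
      (.of_projective (Q.projective_P lam))

theorem extVanishes_of_hasFiltrationBy (hX : HasFiltrationBy Q.std X)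
    (hY : HasFiltrationBy Q.costd Y) : ExtVanishes (n + 1) X Y := by
  obtain ⟨s, hs⟩ := hX
  obtain ⟨t, ht⟩ := hY
  exact hs.extVanishes_left fun i _ => ht.extVanishes_right fun j _ =>
    Q.extVanishes_std_costd n i j

theorem factorMult_ne_zero_of_mem {s : Multiset Λ} (h : IsFilteredBy Q.L s M) (hκ : κ ∈ s) :
    Q.factorMult κ M ≠ 0 := by
  rw [Q.factorMult_eq_sum h, Ne, Multiset.sum_eq_zero_iff]
  exact fun h0 => one_ne_zero <|
    (Q.factorMult_L_self κ).symm.trans (h0 _ (Multiset.mem_map_of_mem _ hκ))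

theorem extVanishes_left_of_forall_L (hX : IsFiniteLength S X)
    (h : ∀ κ, Q.factorMult κ X ≠ 0 → ExtVanishes n (Q.L κ) Y) : ExtVanishes n X Y :=
  have ⟨_, hs⟩ := Q.hasFiltrationBy_L hX
  hs.extVanishes_left fun κ hκ => h κ (Q.factorMult_ne_zero_of_mem hs hκ)

theorem extVanishes_right_of_forall_L (hY : IsFiniteLength S Y)
    (h : ∀ κ, Q.factorMult κ Y ≠ 0 → ExtVanishes n X (Q.L κ)) : ExtVanishes n X Y :=
  have ⟨_, hs⟩ := Q.hasFiltrationBy_L hY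
  hs.extVanishes_right fun κ hκ => h κ (Q.factorMult_ne_zero_of_mem hs hκ)

theorem exists_ne_zero_to_L [Module.Finite S M] [Nontrivial M] :
    ∃ κ, ∃ v : M →ₗ[S] Q.L κ, v ≠ 0 := by
  obtain ⟨N, hN, -⟩ := (eq_top_or_exists_le_coatom (⊥ : Submodule S M)).resolve_left bot_ne_top
  obtain ⟨κ, ⟨e⟩⟩ := Q.fullL (ModuleCat.of S (M ⧸ N)) (isSimpleModule_iff_isCoatom.2 hN)
  have := IsSimpleModule.nontrivial S (Q.L κ)
  exact ⟨κ, e.toLinearMap ∘ₗ N.mkQ,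
    ne_zero_of_surjective (e.surjective.comp N.mkQ_surjective)⟩

theorem exists_ne_zero_from_L [IsArtinian S M] [Nontrivial M] :
    ∃ κ, ∃ v : Q.L κ →ₗ[S] M, v ≠ 0 := by
  obtain ⟨N, hN, -⟩ := (eq_bot_or_exists_atom_le (⊤ : Submodule S M)).resolve_left top_ne_bot
  obtain ⟨κ, ⟨e⟩⟩ := Q.fullL (ModuleCat.of S N) (isSimpleModule_iff_isAtom.2 hN)
  have := IsSimpleModule.nontrivial S (Q.L κ)
  obtain ⟨x, hx⟩ := exists_ne (0 : Q.L κ)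
  refine ⟨κ, N.subtype ∘ₗ e.symm.toLinearMap, fun h0 => hx ?_⟩
  exact e.symm.map_eq_zero_iff.1 (N.injective_subtype (LinearMap.congr_fun h0 x))

theorem eq_zero_of_forall_to_L [Module.Finite S A]
    (h : ∀ κ, Q.factorMult κ B ≠ 0 → ∀ v : A →ₗ[S] Q.L κ, v = 0) (u : A →ₗ[S] B) : u = 0 := by
  by_contra hu
  have hfin : Module.Finite S (ModuleCat.of S (LinearMap.range u)) :=
    .of_surjective _ u.surjective_rangeRestrict
  have : Nontrivial (ModuleCat.of S (LinearMap.range u)) :=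
    Submodule.nontrivial_iff_ne_bot.2 fun h0 => hu (LinearMap.range_eq_bot.1 h0)
  obtain ⟨κ, v, hv⟩ := Q.exists_ne_zero_to_L (M := ModuleCat.of S (LinearMap.range u))
  have hκ : Q.factorMult κ B ≠ 0 := fun h0 => by
    have hle := (Q.factorMult_le_of_surjective (κ := κ) (LinearMap.surjective_of_ne_zero hv)).trans
      (Q.factorMult_le_of_injective (B := B) (LinearMap.range u).injective_subtype)
    rw [h0, factorMult_L_self] at hle
    exact one_ne_zero (le_zero_iff.1 hle)
  refine hv ((LinearMap.cancel_right u.surjective_rangeRestrict).1 ?_)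
  rw [h κ hκ (v ∘ₗ u.rangeRestrict), LinearMap.zero_comp]

theorem eq_zero_of_forall_from_L [IsArtinian S B]
    (h : ∀ κ, Q.factorMult κ A ≠ 0 → ∀ v : Q.L κ →ₗ[S] B, v = 0) (u : A →ₗ[S] B) : u = 0 := by
  by_contra hu
  have : IsArtinian S (ModuleCat.of S (LinearMap.range u)) :=
    inferInstanceAs (IsArtinian S (LinearMap.range u))
  have : Nontrivial (ModuleCat.of S (LinearMap.range u)) :=
    Submodule.nontrivial_iff_ne_bot.2 fun h0 => hu (LinearMap.range_eq_bot.1 h0)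
  obtain ⟨κ, v, hv⟩ := Q.exists_ne_zero_from_L (M := ModuleCat.of S (LinearMap.range u))
  have hκ : Q.factorMult κ A ≠ 0 := fun h0 => by
    have hle := (Q.factorMult_le_of_injective (κ := κ) (LinearMap.injective_of_ne_zero hv)).trans
      (Q.factorMult_le_of_surjective (B := A) u.surjective_rangeRestrict)
    rw [h0, factorMult_L_self] at hle
    exact one_ne_zero (le_zero_iff.1 hle)
  refine hv ((LinearMap.cancel_left (LinearMap.range u).injective_subtype).1 ?_)
  rw [h κ hκ ((LinearMap.range u).subtype ∘ₗ v), LinearMap.comp_zero]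

theorem extVanishes_one_L_right [Module.Finite S M] (hM : ExtVanishes 1 M (Q.costd κ))
    (h : ∀ ν < κ, ∀ v : M →ₗ[S] Q.L ν, v = 0) : ExtVanishes 1 M (Q.L κ) := by
  obtain ⟨j, hj, hsoc⟩ := Q.exists_socle_costd κ
  refine (isShortExact_range_mkQ hj).extVanishes_one_of_exists_lift (fun v => ⟨0, ?_⟩) hM
  rw [LinearMap.comp_zero]
  exact (Q.eq_zero_of_forall_to_L (fun ν hν => h ν
    (Q.lt_of_factorMult_costd_quotient_ne_zero hj hsoc hν)) v).symm

theorem extVanishes_one_L_left [IsArtinian S M] (hM : ExtVanishes 1 (Q.std κ) M)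
    (h : ∀ ν < κ, ∀ v : Q.L ν →ₗ[S] M, v = 0) : ExtVanishes 1 (Q.L κ) M := by
  obtain ⟨t, ht, -⟩ := Q.exists_top_std κ
  refine (isShortExact_ker_subtype ht).extVanishes_one_of_exists_extend (fun v => ⟨0, ?_⟩) hM
  rw [LinearMap.zero_comp]
  exact (Q.eq_zero_of_forall_from_L (fun ν hν => h ν
    (Q.lt_of_factorMult_ker_std_ne_zero ht hν)) v).symm

theorem isFiniteLength [IsArtinianRing S] [Module.Finite S M] : IsFiniteLength S M :=
  isFiniteLength_iff_isNoetherian_isArtinian.2 ⟨inferInstance, inferInstance⟩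

theorem exists_surjective_std [IsArtinianRing S] [Module.Finite S M] [Nontrivial M]
    (hM : ∀ ν, ExtVanishes 1 M (Q.costd ν)) :
    ∃ lam, ∃ u : M →ₗ[S] Q.std lam, Function.Surjective u := by
  obtain ⟨lam, ⟨v, hv⟩, hmin⟩ := exists_minimal_of_wellFoundedLT
    (fun κ => ∃ v : M →ₗ[S] Q.L κ, v ≠ 0) Q.exists_ne_zero_to_L
  obtain ⟨t, ht, htop⟩ := Q.exists_top_std lam
  have hker : ExtVanishes 1 M (ModuleCat.of S (LinearMap.ker t)) :=
    Q.extVanishes_right_of_forall_L isFiniteLength fun κ hκ => Q.extVanishes_one_L_right (hM κ)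
      fun ν hν w => by_contra fun hw =>
        have hlt := hν.trans (Q.lt_of_factorMult_ker_std_ne_zero ht hκ)
        hlt.not_ge (hmin ⟨w, hw⟩ hlt.le)
  obtain ⟨u, rfl⟩ := (isShortExact_ker_subtype ht).exists_lift hker v
  refine ⟨lam, u, LinearMap.range_eq_top.1 (by_contra fun h => hv ?_)⟩
  exact LinearMap.range_le_ker_iff.1 (htop _ h)

theorem exists_injective_costd [IsArtinianRing S] [∀ ν, Module.Finite S (Q.costd ν)]
    [Module.Finite S M] [Nontrivial M] (hM : ∀ ν, ExtVanishes 1 (Q.std ν) M) :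
    ∃ lam, ∃ u : Q.costd lam →ₗ[S] M, Function.Injective u := by
  obtain ⟨lam, ⟨v, hv⟩, hmin⟩ := exists_minimal_of_wellFoundedLT
    (fun κ => ∃ v : Q.L κ →ₗ[S] M, v ≠ 0) Q.exists_ne_zero_from_L
  obtain ⟨j, hj, hsoc⟩ := Q.exists_socle_costd lam
  have hquot : ExtVanishes 1 (ModuleCat.of S (Q.costd lam ⧸ LinearMap.range j)) M :=
    Q.extVanishes_left_of_forall_L isFiniteLength fun κ hκ => Q.extVanishes_one_L_left (hM κ)
      fun ν hν w => by_contra fun hw =>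
        have hlt := hν.trans (Q.lt_of_factorMult_costd_quotient_ne_zero hj hsoc hκ)
        hlt.not_ge (hmin ⟨w, hw⟩ hlt.le)
  obtain ⟨u, rfl⟩ := (isShortExact_range_mkQ hj).exists_extend hquot v
  refine ⟨lam, u, LinearMap.ker_eq_bot.1 (by_contra fun h => hv ?_)⟩
  exact LinearMap.range_le_ker_iff.1 (hsoc _ h)

theorem hasFiltrationBy_std_of_extVanishes [IsArtinianRing S] [Module.Finite S M]
    (hM : ∀ ν, ExtVanishes 1 M (Q.costd ν)) : HasFiltrationBy Q.std M := by
  induction hl : Module.length S M using WellFoundedLT.induction generalizing M with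
  | ind l ih =>
    cases subsingleton_or_nontrivial M with
    | inl h => exact .of_subsingleton h
    | inr h =>
      obtain ⟨lam, u, hu⟩ := Q.exists_surjective_std hM
      have hses := isShortExact_ker_subtype hu
      have hker : LinearMap.ker u ≠ ⊤ := fun h0 =>
        ne_zero_of_surjective hu (LinearMap.ker_eq_top.1 h0)
      exact (ih _ (hl ▸ Submodule.length_lt hker) (M := ModuleCat.of S (LinearMap.ker u))
        (fun ν => hses.extVanishes_contravariant₁ (hM ν) (Q.extVanishes_std_costd 1 lam ν))
        rfl).ext hses (.single lam)

theorem hasFiltrationBy_costd_of_extVanishes [IsArtinianRing S]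
    [∀ ν, Module.Finite S (Q.costd ν)] [Module.Finite S M]
    (hM : ∀ ν, ExtVanishes 1 (Q.std ν) M) : HasFiltrationBy Q.costd M := by
  induction hl : Module.length S M using WellFoundedLT.induction generalizing M with
  | ind l ih =>
    cases subsingleton_or_nontrivial M with
    | inl h => exact .of_subsingleton h
    | inr h =>
      obtain ⟨lam, u, hu⟩ := Q.exists_injective_costd hM
      have hses := isShortExact_range_mkQ hu
      obtain ⟨x, hx⟩ := exists_ne (0 : Q.costd lam)
      have hrange : LinearMap.range u ≠ ⊥ := fun h0 => hx <| hu <|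
        (LinearMap.congr_fun (LinearMap.range_eq_bot.1 h0) x).trans (map_zero u).symm
      exact (HasFiltrationBy.single lam).ext hses <|
        ih _ (hl ▸ Submodule.length_quotient_lt _ hrange)
          (M := ModuleCat.of S (M ⧸ LinearMap.range u))
          (fun ν => hses.extVanishes_covariant₃ (hM ν) (Q.extVanishes_std_costd 1 ν lam)) rfl

end QHData

end ExtOrthogonality

section UniversalExtension

variable {S : Type} [Ring S]

theorem exists_pi_hom_generator (k : Type) [CommRing k] [IsNoetherianRing k] [Algebra k S]
    [Module.Finite k S] {K D : Type} [AddCommGroup K] [Module S K] [Module.Finite S K]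
    [AddCommGroup D] [Module S D] [Module.Finite S D] :
    ∃ (n : ℕ) (g : K →ₗ[S] Fin n → D), ∀ u : K →ₗ[S] D, ∃ θ : (Fin n → D) →ₗ[S] D,
      θ ∘ₗ g = u := by
  let _ := Module.restrictScalars k S K
  let _ := Module.restrictScalars k S D
  have := IsScalarTower.restrictScalars k S K
  have := IsScalarTower.restrictScalars k S D
  have : SMulCommClass S k D := IsScalarTower.to_smulCommClass'
  have : Module.Finite k K := .trans S K
  have : Module.Finite k D := .trans S D
  have : Module.Finite k (K →ₗ[S] D) :=
    .of_injective (LinearMap.restrictScalarsₗ k S K D k) (LinearMap.restrictScalars_injective k)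
  obtain ⟨n, s, hs⟩ := Module.Finite.exists_fin (R := k) (M := K →ₗ[S] D)
  refine ⟨n, LinearMap.pi s, fun u => ?_⟩
  obtain ⟨c, rfl⟩ := (Submodule.mem_span_range_iff_exists_fun k).1 (hs ▸ Submodule.mem_top : u ∈ _)
  refine ⟨∑ i, c i • LinearMap.proj i, ?_⟩
  ext x
  simp

theorem exists_universal_extension (k : Type) [CommRing k] [IsNoetherianRing k] [Algebra k S]
    [Module.Finite k S] {U D : ModuleCat.{0} S} [Module.Finite S U] [Module.Finite S D]
    (hD : ExtVanishes 1 D D) :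
    ∃ (n : ℕ) (U' : ModuleCat.{0} S) (z : modulePow D n →ₗ[S] U') (p : U' →ₗ[S] U),
      IsShortExact z p ∧ ExtVanishes 1 U' D := by
  have := IsNoetherianRing.of_finite k S
  obtain ⟨m, q, hq⟩ := Module.Finite.exists_fin' S U
  have hses := isShortExact_ker_subtype (B := ModuleCat.of S (Fin m → S)) hq
  obtain ⟨n, g, hg⟩ := exists_pi_hom_generator k (S := S) (K := LinearMap.ker q) (D := D)
  obtain ⟨U', z, p, c, hzp, hc⟩ := hses.exists_pushout (Z := modulePow D n) g
  refine ⟨n, U', z, p, hzp, hc.extVanishes_one_of_exists_extend (fun u => ?_) ?_⟩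
  · obtain ⟨θ, rfl⟩ := hg u
    exact ⟨θ ∘ₗ LinearMap.snd S (Fin m → S) (Fin n → D), rfl⟩
  · obtain ⟨s, hs⟩ := (HasFiltrationBy.single (D := fun _ : Unit => D) ()).pow n
    exact (isShortExact_inl_snd _ _).extVanishes_contravariant₂
      (.of_projective (inferInstanceAs (Module.Projective S (Fin m → S))))
      (hs.extVanishes_left fun _ _ => hD)

end UniversalExtension

section Approximation

variable {S Λ : Type} [Ring S] [Fintype Λ] [PartialOrder Λ] (Q : QHData S Λ)
  {A B M N U X Y : ModuleCat.{0} S} {κ lam μ : Λ} {n : ℕ}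

namespace QHData

theorem factorMult_eq_zero_of_hasFiltrationBy {ι : Type} {D : ι → ModuleCat.{0} S}
    (h : HasFiltrationBy D M) (hD : ∀ i, Q.factorMult κ (D i) = 0) : Q.factorMult κ M = 0 :=
  h.induction (motive := fun M => Q.factorMult κ M = 0)
    (fun _ _ => Q.factorMult_of_subsingleton)
    fun i _ _ _ _ h _ hA => by rw [Q.factorMult_eq_add h, hA, hD i, add_zero]

theorem factorMult_pow_ne_zero (h : Q.factorMult κ (modulePow M n) ≠ 0) :
    Q.factorMult κ M ≠ 0 := fun h0 =>
  h <| Q.factorMult_eq_zero_of_hasFiltrationBy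
    ((HasFiltrationBy.single (D := fun _ : Unit => M) ()).pow n) fun _ => h0

theorem hom_costd_eq_zero (h : Q.factorMult lam M = 0) (u : M →ₗ[S] Q.costd lam) : u = 0 := by
  obtain ⟨j, hj, hsoc⟩ := Q.exists_socle_costd lam
  by_contra hu
  have hle := hsoc (LinearMap.range u) fun h0 => hu (LinearMap.range_eq_bot.1 h0)
  have hone : Q.factorMult lam (Q.L lam) ≤ Q.factorMult lam M :=
    (Q.factorMult_le_of_injective (B := ModuleCat.of S (LinearMap.range u))
      (f := Submodule.inclusion hle ∘ₗ j.rangeRestrict)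
      ((Submodule.inclusion_injective hle).comp
        ((LinearMap.injective_rangeRestrict_iff _).2 hj))).trans
      (Q.factorMult_le_of_surjective u.surjective_rangeRestrict)
  rw [factorMult_L_self, h] at hone
  exact one_ne_zero (le_zero_iff.1 hone)

theorem extVanishes_one_costd_of_not_lt [IsArtinianRing S] [Module.Finite S M]
    (h : ∀ κ, Q.factorMult κ M ≠ 0 → ¬ lam < κ) : ExtVanishes 1 M (Q.costd lam) := by
  refine Q.extVanishes_left_of_forall_L isFiniteLength fun κ hκ => ?_
  obtain ⟨t, ht, -⟩ := Q.exists_top_std κ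
  refine (isShortExact_ker_subtype ht).extVanishes_one_of_exists_extend (fun v => ⟨0, ?_⟩)
    (Q.extVanishes_std_costd 0 κ lam)
  rw [LinearMap.zero_comp]
  exact (Q.hom_costd_eq_zero (by_contra fun h0 =>
    h κ hκ (Q.lt_of_factorMult_ker_std_ne_zero ht h0)) v).symm

/-- A short exact sequence `0 → Y → U → M → 0` whose kernel `Y` is filtered by costandard modules
with composition factors below `lam`, and whose middle term `U` has no first extensions by the
costandard modules of index in `A`. For `A = Λ` it is an approximation of `M` by the module `U`
filtered by standard modules. -/
structure IsStdApproximation (lam : Λ) (A : Finset Λ) (y : Y →ₗ[S] U) (p : U →ₗ[S] M) :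
    Prop where
  isShortExact : IsShortExact y p
  finite : Module.Finite S U
  extVanishes : ∀ ν ∈ A, ExtVanishes 1 U (Q.costd ν)
  hasFiltrationBy : HasFiltrationBy Q.costd Y
  lt : ∀ κ, Q.factorMult κ Y ≠ 0 → κ < lam

variable {Q} in
theorem IsStdApproximation.le_of_factorMult_ne_zero {A : Finset Λ} {y : Y →ₗ[S] U}
    {p : U →ₗ[S] M} (h : Q.IsStdApproximation lam A y p)
    (hM : ∀ κ, Q.factorMult κ M ≠ 0 → κ ≤ lam) (hκ : Q.factorMult κ U ≠ 0) : κ ≤ lam := by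
  rw [Q.factorMult_eq_add h.isShortExact, Ne, add_eq_zero, not_and_or] at hκ
  exact hκ.elim (fun hκ => (h.lt κ hκ).le) (hM κ)

variable (k : Type) [CommRing k] [IsArtinianRing k] [Algebra k S] [Module.Finite k S]
  [∀ ν, Module.Finite S (Q.costd ν)]

include k in
variable {Q} in
theorem IsStdApproximation.exists_insert [DecidableEq Λ] {A : Finset Λ} {y : Y →ₗ[S] U}
    {p : U →ₗ[S] M} (h : Q.IsStdApproximation lam A y p) {ν : Λ} (hν : ν < lam)
    (hA : ∀ x ∈ A, ¬ x < ν) : ∃ (Y' U' : ModuleCat.{0} S) (y' : Y' →ₗ[S] U') (p' : U' →ₗ[S] M),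
      Q.IsStdApproximation lam (insert ν A) y' p' := by
  have := IsArtinianRing.of_finite k S
  have := h.finite
  obtain ⟨n, U', z, p', hzp, hU'⟩ := exists_universal_extension k (U := U) (D := Q.costd ν)
    (Q.extVanishes_one_costd fun κ => Q.le_of_factorMult_costd_ne_zero)
  have hpow {κ : Λ} (hκ : Q.factorMult κ (modulePow (Q.costd ν) n) ≠ 0) : κ ≤ ν :=
    Q.le_of_factorMult_costd_ne_zero (Q.factorMult_pow_ne_zero hκ)
  have hfin : Module.Finite S (modulePow (Q.costd ν) n) :=
    inferInstanceAs (Module.Finite S (Fin n → Q.costd ν))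
  obtain ⟨Y', f, g, b, hfg, hb, -⟩ := hzp.exists_pullback h.isShortExact
  refine ⟨Y', U', b, p ∘ₗ p', hb, hzp.finite hfin h.finite, ?_,
    ((HasFiltrationBy.single ν).pow n).ext hfg h.hasFiltrationBy, fun κ hκ => ?_⟩
  · rw [Finset.forall_mem_insert]
    refine ⟨hU', fun x hx => hzp.extVanishes_contravariant₂ ?_ (h.extVanishes x hx)⟩
    exact Q.extVanishes_one_costd_of_not_lt fun κ hκ hlt => hA x hx (hlt.trans_le (hpow hκ))
  · rw [Q.factorMult_eq_add hfg, Ne, add_eq_zero, not_and_or] at hκ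
    exact hκ.elim (fun hκ => (hpow hκ).trans_lt hν) (h.lt κ)

include k in
theorem exists_isStdApproximation [Module.Finite S M]
    (hM : ∀ κ, Q.factorMult κ M ≠ 0 → κ ≤ lam) {A : Finset Λ} (hA : IsUpperSet (A : Set Λ)) :
    ∃ (Y U : ModuleCat.{0} S) (y : Y →ₗ[S] U) (p : U →ₗ[S] M),
      Q.IsStdApproximation lam A y p := by
  classical
  have := IsArtinianRing.of_finite k S
  induction A using Finset.strongInduction with
  | H A ih =>
    obtain rfl | hne := A.eq_empty_or_nonempty
    · refine ⟨ModuleCat.of S PUnit, M, 0, LinearMap.id,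
        ⟨⟨fun _ _ _ => rfl, Function.surjective_id, ?_⟩, inferInstance, fun ν hν => ?_,
          .of_subsingleton (inferInstanceAs (Subsingleton PUnit)), fun κ hκ => ?_⟩⟩
      · exact (LinearMap.exact_zero_iff_injective _ _).2 Function.injective_id
      · exact absurd hν (Finset.notMem_empty ν)
      · exact absurd Q.factorMult_of_subsingleton hκ
    obtain ⟨ν, hν⟩ := A.exists_minimal hne
    have hmin : ∀ x ∈ A.erase ν, ¬ x < ν := fun x hx => hν.not_lt (Finset.mem_of_mem_erase hx)
    have herase : IsUpperSet (A.erase ν : Set Λ) := fun x z hxz hx => by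
      rw [Finset.mem_coe, Finset.mem_erase] at hx ⊢
      exact ⟨fun h => hmin x (Finset.mem_erase.2 hx) (lt_of_le_of_ne (h ▸ hxz) hx.1), hA hxz hx.2⟩
    obtain ⟨Y, U, y, p, h⟩ := ih _ (Finset.erase_ssubset hν.prop) herase
    rw [← Finset.insert_erase hν.prop]
    by_cases hlt : ν < lam
    · exact h.exists_insert k hlt hmin
    · have := h.finite
      refine ⟨Y, U, y, p, { h with
        extVanishes := (Finset.forall_mem_insert _ _ _).2 ⟨?_, h.extVanishes⟩ }⟩
      exact Q.extVanishes_one_costd_of_not_lt fun κ hκ hνκ =>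
        hlt (hνκ.trans_le (h.le_of_factorMult_ne_zero hM hκ))

end QHData

end Approximation

section TiltingCover

variable {S Λ : Type} [Ring S] [Fintype Λ] [PartialOrder Λ] (Q : QHData S Λ)
  {A B M U X : ModuleCat.{0} S} {κ lam : Λ}

theorem isComplemented_map_subtype_of_isCompl {N B : Submodule S M} (hNB : IsCompl N B)
    {N₁ N₂ : Submodule S N} (h : IsCompl N₁ N₂) : IsComplemented (N₁.map N.subtype) := by
  have hsup : N₁.map N.subtype ⊔ N₂.map N.subtype = N := by
    rw [← Submodule.map_sup, h.sup_eq_top, Submodule.map_top, Submodule.range_subtype]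
  have hdisj : Disjoint (N₁.map N.subtype) (N₂.map N.subtype) := by
    rw [disjoint_iff, ← Submodule.map_inf _ N.injective_subtype, h.inf_eq_bot, Submodule.map_bot]
  exact ⟨_, hdisj.isCompl_sup_right_of_isCompl_sup_left (hsup.symm ▸ hNB)⟩

namespace QHData

theorem factorMult_costd_self : Q.factorMult lam (Q.costd lam) = 1 := by
  obtain ⟨j, hj, hsoc⟩ := Q.exists_socle_costd lam
  have h0 : Q.factorMult lam (ModuleCat.of S (Q.costd lam ⧸ LinearMap.range j)) = 0 :=
    by_contra fun h => lt_irrefl _ (Q.lt_of_factorMult_costd_quotient_ne_zero hj hsoc h)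
  rw [Q.factorMult_eq_add (isShortExact_range_mkQ hj), factorMult_L_self, h0, add_zero]

theorem factorMult_eq_add_of_isCompl {N B : Submodule S M} (h : IsCompl N B) :
    Q.factorMult κ M =
      Q.factorMult κ (ModuleCat.of S N) + Q.factorMult κ (ModuleCat.of S B) := by
  rw [Q.factorMult_eq_add (isShortExact_subtype_mkQ N),
    Q.factorMult_congr (A := ModuleCat.of S (M ⧸ N)) (B := ModuleCat.of S B)
      (Submodule.quotientEquivOfIsCompl N B h)]

theorem exists_isCompl_indecomposable [IsArtinianRing S] [Module.Finite S M]
    (hM : Q.factorMult lam M = 1) : ∃ N B : Submodule S M, IsCompl N B ∧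
      Q.factorMult lam (ModuleCat.of S N) = 1 ∧ Q.factorMult lam (ModuleCat.of S B) = 0 ∧
      ∀ N₁ N₂ : Submodule S N, IsCompl N₁ N₂ → N₁ = ⊥ ∨ N₂ = ⊥ := by
  obtain ⟨N, ⟨⟨B, hNB⟩, hN⟩, hmin⟩ := exists_minimal_of_wellFoundedLT
    (fun N : Submodule S M => IsComplemented N ∧ Q.factorMult lam (ModuleCat.of S N) ≠ 0)
    ⟨⊤, isComplemented_top, by
      rw [Q.factorMult_congr (A := ModuleCat.of S (⊤ : Submodule S M)) Submodule.topEquiv, hM]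
      exact one_ne_zero⟩
  have hadd := hM ▸ Q.factorMult_eq_add_of_isCompl hNB
  have hone : Q.factorMult lam (ModuleCat.of S N) = 1 :=
    (hadd ▸ le_self_add).antisymm (Order.one_le_iff_ne_zero.2 hN)
  refine ⟨N, B, hNB, hone, ?_, fun N₁ N₂ h => ?_⟩
  · rw [hone] at hadd
    exact ENat.add_right_injective_of_ne_top ENat.one_ne_top (hadd.symm.trans (add_zero 1).symm)
  · have hbot {N₁ N₂ : Submodule S N} (h : IsCompl N₁ N₂)
        (h0 : Q.factorMult lam (ModuleCat.of S N₁) ≠ 0) : N₂ = ⊥ := by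
      have e := Submodule.equivMapOfInjective N.subtype N.injective_subtype N₁
      have hle := hmin ⟨isComplemented_map_subtype_of_isCompl hNB h,
        Q.factorMult_congr (A := ModuleCat.of S N₁) (B := ModuleCat.of S (N₁.map N.subtype)) e ▸ h0⟩
        (Submodule.map_subtype_le N N₁)
      nth_rewrite 1 [← Submodule.map_subtype_top N] at hle
      rw [Submodule.map_le_map_iff_of_injective N.injective_subtype, top_le_iff] at hle
      exact eq_bot_of_top_isCompl (hle ▸ h)
    have hN' := Q.factorMult_eq_add_of_isCompl (M := ModuleCat.of S N) h ▸ hN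
    rw [Ne, add_eq_zero, not_and_or] at hN'
    exact hN'.elim (fun h0 => .inr (hbot h h0)) fun h0 => .inl (hbot h.symm h0)

section

variable [IsArtinianRing S] {i : A →ₗ[S] U} {r : U →ₗ[S] A} (hri : r ∘ₗ i = LinearMap.id)

include hri

theorem hasFiltrationBy_std_of_retract (hU : HasFiltrationBy Q.std U) :
    HasFiltrationBy Q.std A := by
  have := hU.finite
  have : Module.Finite S A := .of_surjective r fun a => ⟨i a, LinearMap.congr_fun hri a⟩
  exact Q.hasFiltrationBy_std_of_extVanishes fun ν =>
    (Q.extVanishes_of_hasFiltrationBy hU (.single ν)).of_retract_left hri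

theorem hasFiltrationBy_costd_of_retract [∀ ν, Module.Finite S (Q.costd ν)]
    (hU : HasFiltrationBy Q.costd U) : HasFiltrationBy Q.costd A := by
  have := hU.finite
  have : Module.Finite S A := .of_surjective r fun a => ⟨i a, LinearMap.congr_fun hri a⟩
  exact Q.hasFiltrationBy_costd_of_extVanishes fun ν =>
    (Q.extVanishes_of_hasFiltrationBy (.single ν) hU).of_retract_right hri

end

theorem exists_isIndecTilting_retract [IsArtinianRing S] [∀ ν, Module.Finite S (Q.costd ν)]
    (hΔ : HasFiltrationBy Q.std U) (hnabla : HasFiltrationBy Q.costd U)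
    (hone : Q.factorMult lam U = 1) (hle : ∀ κ, Q.factorMult κ U ≠ 0 → κ ≤ lam) :
    ∃ (A : ModuleCat.{0} S) (i : A →ₗ[S] U) (r : U →ₗ[S] A), r ∘ₗ i = LinearMap.id ∧
      IsIndecTilting S Q lam A ∧ Q.factorMult lam (ModuleCat.of S (LinearMap.ker r)) = 0 := by
  have := hΔ.finite
  obtain ⟨N, B, hNB, hN, hB, hind⟩ := Q.exists_isCompl_indecomposable hone
  have hri : N.projectionOnto B hNB ∘ₗ N.subtype = LinearMap.id :=
    LinearMap.ext fun x => Submodule.projectionOnto_apply_left hNB x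
  refine ⟨ModuleCat.of S N, N.subtype, N.projectionOnto B hNB, hri,
    ⟨⟨?_, ?_⟩, ?_, hind, ?_, ?_⟩, ?_⟩
  · exact hasFiltrationBy_iff.1 (Q.hasFiltrationBy_std_of_retract hri hΔ)
  · exact hasFiltrationBy_iff.1 (Q.hasFiltrationBy_costd_of_retract hri hnabla)
  · by_contra h
    have := not_nontrivial_iff_subsingleton.1 h
    exact zero_ne_one (Q.factorMult_of_subsingleton.symm.trans hN)
  · exact (Q.compFactorMult_iff isFiniteLength).2 hN
  · refine fun κ hκ => (hle κ fun h0 => Q.isCompFactor_iff.1 hκ (le_zero_iff.1 ?_)).eq_or_lt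
    exact h0 ▸ Q.factorMult_le_of_injective (A := ModuleCat.of S N) N.injective_subtype
  · rwa [Submodule.ker_projectionOnto]

/-- A surjection through which every morphism from a standard module factors. When the source is
filtered by costandard modules, this says that so is the kernel. -/
structure IsStdCover (p : M →ₗ[S] X) : Prop where
  surjective : Function.Surjective p
  exists_lift : ∀ μ (u : Q.std μ →ₗ[S] X), ∃ v : Q.std μ →ₗ[S] M, p ∘ₗ v = u

variable {Q}

theorem IsStdCover.of_comp {p : M →ₗ[S] X} {q : U →ₗ[S] M} (h : Q.IsStdCover (p ∘ₗ q)) :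
    Q.IsStdCover p where
  surjective := .of_comp h.surjective
  exists_lift μ u := by
    obtain ⟨v, hv⟩ := h.exists_lift μ u
    exact ⟨q ∘ₗ v, hv⟩

theorem IsStdCover.hasFiltrationBy_ker [IsArtinianRing S] [∀ ν, Module.Finite S (Q.costd ν)]
    {p : M →ₗ[S] X} (h : Q.IsStdCover p) (hM : HasFiltrationBy Q.costd M) :
    HasFiltrationBy Q.costd (ModuleCat.of S (LinearMap.ker p)) := by
  have := hM.finite
  exact Q.hasFiltrationBy_costd_of_extVanishes fun μ =>
    (isShortExact_ker_subtype h.surjective).extVanishes_one_of_exists_lift (h.exists_lift μ)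
      (Q.extVanishes_of_hasFiltrationBy (.single μ) hM)

theorem IsStdCover.of_isShortExact {f : A →ₗ[S] M} {p : M →ₗ[S] X}
    (h : IsShortExact f p) (hA : HasFiltrationBy Q.costd A) : Q.IsStdCover p where
  surjective := h.surjective
  exists_lift μ := h.exists_lift (Q.extVanishes_of_hasFiltrationBy (.single μ) hA)

variable (Q) in
theorem exists_isStdCover_costd (k : Type) [CommRing k] [IsArtinianRing k] [Algebra k S]
    [Module.Finite k S] [∀ ν, Module.Finite S (Q.costd ν)] {T : ModuleCat.{0} S}
    (hT : IsFullTilting S Q T) (lam : Λ) : ∃ p : T →ₗ[S] Q.costd lam, Q.IsStdCover p := by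
  have := IsArtinianRing.of_finite k S
  obtain ⟨Y, U, y, p, h⟩ := Q.exists_isStdApproximation k (M := Q.costd lam) (A := .univ)
    (fun κ => Q.le_of_factorMult_costd_ne_zero) (by simpa using isUpperSet_univ)
  have := h.finite
  have hY : Q.factorMult lam Y = 0 := by_contra fun h0 => lt_irrefl _ (h.lt _ h0)
  obtain ⟨A, i, r, hri, hA, hker⟩ := Q.exists_isIndecTilting_retract (lam := lam)
    (Q.hasFiltrationBy_std_of_extVanishes fun ν => h.extVanishes ν (Finset.mem_univ ν))
    ((h.hasFiltrationBy).ext h.isShortExact (.single lam))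
    (by rw [Q.factorMult_eq_add h.isShortExact, hY, Q.factorMult_costd_self, zero_add])
    (fun κ => h.le_of_factorMult_ne_zero fun κ => Q.le_of_factorMult_costd_ne_zero)
  obtain ⟨C, ⟨e⟩⟩ := hT.2.2 lam A hA
  have hp : p ∘ₗ i ∘ₗ r = p := by
    ext x
    have hx : x - i (r x) ∈ LinearMap.ker r := by
      rw [LinearMap.mem_ker, map_sub, sub_eq_zero]
      exact (LinearMap.congr_fun hri (r x)).symm
    have h0 := LinearMap.congr_fun
      (Q.hom_costd_eq_zero hker (p ∘ₗ (LinearMap.ker r).subtype)) ⟨_, hx⟩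
    exact (sub_eq_zero.1 ((map_sub p _ _).symm.trans h0)).symm
  refine ⟨p ∘ₗ i ∘ₗ LinearMap.fst S A C ∘ₗ e,
    IsStdCover.of_comp (q := e.symm.toLinearMap ∘ₗ LinearMap.inl S A C ∘ₗ r) ?_⟩
  convert IsStdCover.of_isShortExact h.isShortExact h.hasFiltrationBy using 1
  ext x
  simpa using LinearMap.congr_fun hp x

end QHData

end TiltingCover

section HomTilting

variable {S : Type} [Ring S] {A B C M N T X Y : ModuleCat.{0} S} {m n : ℕ}

/-- `Hom_S(T, Tⁿ)` is the free module of rank `n` over the Ringel dual. -/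
def homTModPowEquiv (T : ModuleCat.{0} S) (n : ℕ) :
    (Fin n → RingelDualRing S T) ≃ₗ[RingelDualRing S T] homTMod S T (modulePow T n) where
  toFun a := LinearMap.pi fun i => (a i).unop
  invFun u i := MulOpposite.op (LinearMap.proj (φ := fun _ => T) i ∘ₗ u)
  left_inv _ := rfl
  right_inv _ := rfl
  map_add' _ _ := rfl
  map_smul' _ _ := rfl

theorem homTModPowEquiv_single (i : Fin n) :
    homTModPowEquiv T n (Pi.single i 1) = LinearMap.single S (fun _ => T) i := by
  refine LinearMap.ext fun x => funext fun j => ?_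
  change (Pi.single (M := fun _ => RingelDualRing S T) i 1 j).unop x =
    Pi.single (M := fun _ => T) i x j
  obtain rfl | hij := eq_or_ne j i
  · rw [Pi.single_eq_same, Pi.single_eq_same]
    rfl
  · rw [Pi.single_eq_of_ne hij, Pi.single_eq_of_ne hij]
    rfl

instance projective_homTMod_pow :
    Module.Projective (RingelDualRing S T) (homTMod S T (modulePow T n)) :=
  .of_equiv (homTModPowEquiv T n)

theorem eq_of_homMap_eq {p : modulePow T n →ₗ[S] X} (hp : Function.Surjective p) {g h : X →ₗ[S] Y}
    (hgh : homMap T g = homMap T h) : g = h := by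
  refine (LinearMap.cancel_right hp).1 (LinearMap.pi_ext' fun i => ?_)
  exact LinearMap.congr_fun hgh (p ∘ₗ LinearMap.single S (fun _ => T) i)

theorem exists_homMap_eq_of_pow
    (Φ : homTMod S T (modulePow T n) →ₗ[RingelDualRing S T] homTMod S T Y) :
    ∃ h : modulePow T n →ₗ[S] Y, homMap T h = Φ := by
  let φ (i : Fin n) : T →ₗ[S] Y := Φ (LinearMap.single S (fun _ => T) i)
  refine ⟨LinearMap.lsum S (fun _ => T) ℕ φ, ?_⟩
  refine (LinearMap.cancel_right (homTModPowEquiv T n).surjective).1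
    (LinearMap.pi_ext' fun i => LinearMap.ext_ring ?_)
  change homMap T _ (homTModPowEquiv T n (Pi.single i 1)) = Φ (homTModPowEquiv T n (Pi.single i 1))
  rw [homTModPowEquiv_single]
  exact LinearMap.ext fun x => LinearMap.lsum_piSingle _ _ _ φ i x

variable {Λ : Type} [Fintype Λ] [PartialOrder Λ]

theorem QHData.IsStdCover.coprod {Q : QHData S Λ} {f : A →ₗ[S] B} {g : B →ₗ[S] C}
    (h : IsShortExact f g) {p : M →ₗ[S] A} {q : N →ₗ[S] B} (hp : Q.IsStdCover p)
    (hq : Q.IsStdCover (g ∘ₗ q)) :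
    Q.IsStdCover (M := ModuleCat.of S (M × N)) ((f ∘ₗ p).coprod q) where
  surjective y := by
    obtain ⟨t, ht⟩ := hq.surjective (g y)
    obtain ⟨x, hx⟩ := (h.exact (y - q t)).1 (by rw [map_sub, ← ht, LinearMap.comp_apply, sub_self])
    obtain ⟨s, rfl⟩ := hp.surjective x
    exact ⟨(s, t), by rw [LinearMap.coprod_apply, LinearMap.comp_apply, hx, sub_add_cancel]⟩
  exists_lift μ u := by
    obtain ⟨v₁, hv₁⟩ := hq.exists_lift μ (g ∘ₗ u)
    obtain ⟨v₂, hv₂⟩ := h.exists_factor (u - q ∘ₗ v₁)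
      (by rw [LinearMap.comp_sub, ← hv₁, LinearMap.comp_assoc, sub_self])
    obtain ⟨v₃, rfl⟩ := hp.exists_lift μ v₂
    refine ⟨v₃.prod v₁, ?_⟩
    rw [LinearMap.coprod_comp_prod, LinearMap.comp_assoc, hv₂, sub_add_cancel]

/-- A tilting module with a cover onto every costandard module: what is needed of a full tilting
module to resolve the modules filtered by costandard modules by its powers. -/
structure QHData.IsTiltingGenerator (Q : QHData S Λ) (T : ModuleCat.{0} S) : Prop where
  hasFiltrationBy_std : HasFiltrationBy Q.std T
  hasFiltrationBy_costd : HasFiltrationBy Q.costd T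
  exists_isStdCover : ∀ lam, ∃ p : T →ₗ[S] Q.costd lam, Q.IsStdCover p

namespace QHData.IsTiltingGenerator

variable {Q : QHData S Λ} (hT : Q.IsTiltingGenerator T)

include hT

theorem exists_isStdCover_pow (hX : HasFiltrationBy Q.costd X) :
    ∃ (n : ℕ) (p : modulePow T n →ₗ[S] X), Q.IsStdCover p := by
  refine hX.induction (motive := fun X => ∃ (n : ℕ) (p : modulePow T n →ₗ[S] X), Q.IsStdCover p)
    ?_ ?_
  · exact fun X h => ⟨0, 0, fun _ => ⟨0, Subsingleton.elim _ _⟩,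
      fun _ _ => ⟨0, LinearMap.ext fun _ => Subsingleton.elim _ _⟩⟩
  · rintro lam A B f g h hA ⟨n, p, hp⟩
    obtain ⟨q, hq⟩ := hT.exists_isStdCover lam
    obtain ⟨w, rfl⟩ := h.exists_lift (Q.extVanishes_of_hasFiltrationBy hT.hasFiltrationBy_std hA) q
    let e : (modulePow T n × T) ≃ₗ[S] modulePow T (n + 1) :=
      (LinearEquiv.prodComm S _ _).trans (Fin.consLinearEquiv S fun _ => T)
    refine ⟨n + 1, (f ∘ₗ p).coprod w ∘ₗ e.symm.toLinearMap, ?_⟩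
    refine .of_comp (U := ModuleCat.of S (modulePow T n × T)) (q := e.toLinearMap) ?_
    rw [LinearMap.comp_assoc, e.symm_comp, LinearMap.comp_id]
    exact hp.coprod h hq

theorem isShortExact_homMap {f : A →ₗ[S] B} {g : B →ₗ[S] C} (h : IsShortExact f g)
    (hA : HasFiltrationBy Q.costd A) : IsShortExact (homMap T f) (homMap T g) :=
  h.homMap (h.exists_lift (Q.extVanishes_of_hasFiltrationBy hT.hasFiltrationBy_std hA))

variable [IsArtinianRing S] [∀ ν, Module.Finite S (Q.costd ν)]

theorem exists_isShortExact_pow (hX : HasFiltrationBy Q.costd X) :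
    ∃ (n : ℕ) (K : ModuleCat.{0} S) (f : K →ₗ[S] modulePow T n) (p : modulePow T n →ₗ[S] X),
      IsShortExact f p ∧ HasFiltrationBy Q.costd K := by
  obtain ⟨n, p, hp⟩ := hT.exists_isStdCover_pow hX
  exact ⟨n, _, _, p, isShortExact_ker_subtype hp.surjective,
    hp.hasFiltrationBy_ker (hT.hasFiltrationBy_costd.pow n)⟩

theorem exists_homMap_eq (hX : HasFiltrationBy Q.costd X)
    (Φ : homTMod S T X →ₗ[RingelDualRing S T] homTMod S T Y) :
    ∃ s : X →ₗ[S] Y, homMap T s = Φ := by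
  obtain ⟨n, K, f, p, hfp, hK⟩ := hT.exists_isShortExact_pow hX
  obtain ⟨m, _, _, q, hq, -⟩ := hT.exists_isShortExact_pow hK
  obtain ⟨g, hg⟩ := exists_homMap_eq_of_pow (Φ ∘ₗ homMap T p)
  have hgf : g ∘ₗ f = 0 := by
    refine eq_of_homMap_eq hq.surjective (LinearMap.ext fun u : T →ₗ[S] K => ?_)
    refine (LinearMap.congr_fun hg (f ∘ₗ u)).trans ((congrArg Φ ?_).trans (map_zero Φ))
    exact LinearMap.ext fun x => LinearMap.congr_fun hfp.comp_eq_zero (u x)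
  obtain ⟨s, rfl⟩ := hfp.exists_desc g hgf
  refine ⟨s, LinearMap.ext fun u => ?_⟩
  obtain ⟨w, rfl⟩ := (hT.isShortExact_homMap hfp hK).surjective u
  exact LinearMap.congr_fun hg w

theorem projective_homTMod_iff (hX : HasFiltrationBy Q.costd X) :
    Module.Projective (RingelDualRing S T) (homTMod S T X) ↔ HasFiltrationBy Q.std X := by
  obtain ⟨n, K, f, p, hfp, hK⟩ := hT.exists_isShortExact_pow hX
  constructor
  · intro _
    obtain ⟨Φ, hΦ⟩ := Module.projective_lifting_property (homMap T p) LinearMap.id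
      (hT.isShortExact_homMap hfp hK).surjective
    obtain ⟨s, rfl⟩ := hT.exists_homMap_eq hX Φ
    exact Q.hasFiltrationBy_std_of_retract (U := modulePow T n)
      (eq_of_homMap_eq hfp.surjective hΦ) (hT.hasFiltrationBy_std.pow n)
  · intro hX'
    obtain ⟨s, hs⟩ := hfp.exists_lift (Q.extVanishes_of_hasFiltrationBy hX' hK) LinearMap.id
    exact Module.Projective.of_split (M := homTMod S T (modulePow T n))
      (homMap T s) (homMap T p)
      (LinearMap.ext fun u : T →ₗ[S] X => LinearMap.ext fun x => LinearMap.congr_fun hs (u x))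

theorem hasProjectiveDimensionLE_homTMod_iff (hX : HasFiltrationBy Q.costd X) (d : ℕ) :
    HasProjectiveDimensionLE (homTMod S T X) d ↔ ∀ ν, ExtVanishes (d + 1) X (Q.costd ν) := by
  induction d generalizing X with
  | zero =>
    have := hX.finite
    rw [HasProjectiveDimensionLE, zero_add, ← projective_iff_hasProjectiveDimensionLT_one,
      ← IsProjective.iff_projective]
    exact (hT.projective_homTMod_iff hX).trans
      ⟨fun h ν => Q.extVanishes_of_hasFiltrationBy h (.single ν),
        Q.hasFiltrationBy_std_of_extVanishes⟩
  | succ d ih =>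
    obtain ⟨n, K, f, p, hfp, hK⟩ := hT.exists_isShortExact_pow hX
    have hN (e : ℕ) (ν : Λ) : ExtVanishes (e + 1) (modulePow T n) (Q.costd ν) :=
      Q.extVanishes_of_hasFiltrationBy (hT.hasFiltrationBy_std.pow n) (.single ν)
    exact ((hT.isShortExact_homMap hfp hK).shortExact.hasProjectiveDimensionLT_X₃_iff d
        ((IsProjective.iff_projective _).1 projective_homTMod_pow)).trans
      ((ih hK).trans (forall_congr' fun ν => (hfp.extVanishes_succ_iff (hN · ν)).symm))

end QHData.IsTiltingGenerator

end HomTilting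

section FiniteDimensional

variable {S : Type} [Ring S]

theorem finite_of_isEssential (k : Type) [Field k] [Algebra k S] [Module.Finite k S]
    {L I : ModuleCat.{0} S} [Module.Finite S L] {j : L →ₗ[S] I}
    (hj : Function.Injective j)
    (hess : ∀ N : Submodule S I, N ⊓ LinearMap.range j = ⊥ → N = ⊥) : Module.Finite S I := by
  let _ := Module.restrictScalars k S L
  let _ := Module.restrictScalars k S I
  have := IsScalarTower.restrictScalars k S L
  have := IsScalarTower.restrictScalars k S I
  have : Module.Finite k L := .trans S L
  obtain ⟨φ, hφ⟩ := LinearMap.exists_leftInverse_of_injective (j.restrictScalars k)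
    (LinearMap.ker_eq_bot.2 hj)
  let Ψ : I →ₗ[k] S →ₗ[k] L := LinearMap.llcomp k S I L φ ∘ₗ (Algebra.lsmul k k I).toLinearMap.flip
  have hΨ : Function.Injective Ψ := by
    refine LinearMap.ker_eq_bot.1 (LinearMap.ker_eq_bot'.2 fun x hx => ?_)
    refine Submodule.span_singleton_eq_bot.1 (hess (Submodule.span S {x}) (eq_bot_iff.2 ?_))
    rintro y ⟨hy, l, rfl⟩
    obtain ⟨s, hs⟩ := Submodule.mem_span_singleton.1 hy
    have hl : l = φ (s • x) := by
      rw [hs]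
      exact (LinearMap.congr_fun hφ l).symm
    have h0 : φ (s • x) = 0 := LinearMap.congr_fun hx s
    rw [hl, h0, map_zero]
    exact zero_mem _
  have : Module.Finite k I := .of_injective Ψ hΨ
  exact .of_restrictScalars_finite k S I

theorem QHData.finite_costd (k : Type) [Field k] [Algebra k S] [Module.Finite k S] {Λ : Type}
    [Fintype Λ] [PartialOrder Λ] (Q : QHData S Λ) (lam : Λ) : Module.Finite S (Q.costd lam) := by
  have := IsNoetherianRing.of_finite k S
  obtain ⟨V, ⟨e⟩, -⟩ := Q.costdSpec lam
  obtain ⟨-, j, hj, hess⟩ := Q.injHull lam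
  have := Q.finiteL lam
  have := finite_of_isEssential k hj hess
  exact .equiv e.symm

end FiniteDimensional

section Main

variable {S Λ : Type} [Ring S] [Fintype Λ] [PartialOrder Λ] {Q : QHData S Λ}
  {T X : ModuleCat.{0} S}

theorem QHData.isTiltingGenerator_of_isFullTilting (k : Type) [CommRing k] [IsArtinianRing k]
    [Algebra k S] [Module.Finite k S] [∀ ν, Module.Finite S (Q.costd ν)]
    (hT : IsFullTilting S Q T) : Q.IsTiltingGenerator T where
  hasFiltrationBy_std := hasFiltrationBy_iff.2 hT.1.1
  hasFiltrationBy_costd := hasFiltrationBy_iff.2 hT.1.2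
  exists_isStdCover := Q.exists_isStdCover_costd k hT

theorem QHData.IsTiltingGenerator.wfdLE_iff [IsArtinianRing S]
    [∀ ν, Module.Finite S (Q.costd ν)] (hT : Q.IsTiltingGenerator T)
    (hX : HasFiltrationBy Q.costd X) (d : ℕ) :
    WfdLE S Q X d ↔ ∀ ν, ExtVanishes (d + 1) X (Q.costd ν) := by
  have hStd (e : ℕ) {M : ModuleCat.{0} S} (hM : HasFiltrationBy Q.std M) (ν : Λ) :
      ExtVanishes (e + 1) M (Q.costd ν) :=
    Q.extVanishes_of_hasFiltrationBy hM (.single ν)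
  have hRes : HasResolution (HasFiltrationBy Q.std) d X ↔ WfdLE S Q X d := by
    simp only [hasResolution_iff_exists_isExactSeq HasFiltrationBy.congr, hasFiltrationBy_iff]
    rfl
  rw [← hRes]
  refine hasResolution_iff (𝒟 := HasFiltrationBy Q.costd)
    (E := fun d X => ∀ ν, ExtVanishes (d + 1) X (Q.costd ν))
    (fun Y hY => hStd 0 hY) (fun Y hY h => ?_) (fun e K M Y f g h hM => ?_) (fun Y hY => ?_) hX
  · have := hY.finite
    exact Q.hasFiltrationBy_std_of_extVanishes h
  · exact forall_congr' fun ν => h.extVanishes_succ_iff (hStd · hM ν)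
  · obtain ⟨n, K, f, p, h, hK⟩ := hT.exists_isShortExact_pow hY
    exact ⟨K, _, f, p, h, hT.hasFiltrationBy_std.pow n, hK⟩

end Main

end QHPaper

open QHPaper in
theorem stmt5_general (k S Λ : Type) [CommRing k] [IsArtinianRing k] [Ring S] [Algebra k S]
    [Module.Finite k S] [Fintype Λ] [PartialOrder Λ] (QH : QHData S Λ)
    [∀ ν, Module.Finite S (QH.costd ν)] (T : ModuleCat.{0} S) (hT : IsFullTilting S QH T)
    (X : ModuleCat.{0} S) (hX : InCostdFilt S QH X) :
    wfd S QH X = projdim (RingelDualRing S T) (homTMod S T X) := by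
  have := IsArtinianRing.of_finite k S
  have hG := QHData.isTiltingGenerator_of_isFullTilting k hT
  have hX := hasFiltrationBy_iff.2 hX
  refine congrArg sInf (Set.ext fun d => ?_)
  calc
    WfdLE S QH X d ↔ ∀ ν, ExtVanishes (d + 1) X (QH.costd ν) := hG.wfdLE_iff hX d
    _ ↔ HasProjectiveDimensionLE (homTMod S T X) d :=
      (hG.hasProjectiveDimensionLE_homTMod_iff hX d).symm
    _ ↔ ProjdimLE (RingelDualRing S T) (homTMod S T X) d := projdimLE_iff.symm

open QHPaper in
/-- Let `S` be a quasi-hereditary algebra with Ringel dual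
`S' = End_S(T)^op` for a full tilting module `T`. For every `lam ∈ Λ⁺`, the
Δ-filtration dimension of the costandard module `∇(lam)` of `S` equals the projective
dimension of the standard module `Δ'(lam) = Hom_S(T, ∇(lam))` of `S'`. -/
theorem stmt5 (k S Λ : Type) [Field k] [Ring S] [Algebra k S] [FiniteDimensional k S]
    [Fintype Λ] [PartialOrder Λ]
    (QH : QHData S Λ) (T : ModuleCat.{0} S) (hT : IsFullTilting S QH T) (lam : Λ) :
    wfd S QH (QH.costd lam) = projdim (RingelDualRing S T) (homTMod S T (QH.costd lam)) := by
  have (ν : Λ) : Module.Finite S (QH.costd ν) := QH.finite_costd k ν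
  exact stmt5_general k S Λ QH T hT _ (hasFiltrationBy_iff.1 (.single lam))
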